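/- arXiv:1109.5526 — 2 statements merged into one kernel-verified Lean document; each statement's English description precedes it below -/
import Mathlib

section
/- There exists a constant c : ℕ such that for every n : ℕ and every code e with 2·|e| + c·(Nat.size n) ≤ n: if eval e 0 is defined, then evaln T'_n e 0 = some ((eval e 0).get) (every program of length at most n/2 - O(log n) that does not terminate within T'_n steps never terminates). -/
/-!
Fix a large `n`. Choose `s` minimal such that codes of length about `2 * s` can be told apart in
`2 ^ n` ways. Then codes of length at most `2 * s` miss some `x < 2 ^ n` at every time bound
(`exists_missed`), so if a code `h` of length at most `s` can search for a time `t` by which every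
halting code of length at most `n / 2` has halted, and output an `x < 2 ^ n` not produced within
time `t` by codes of length at most `2 * s`, then `K x ≤ s` while `Kt t x > 2 * s`. This forces
`Tn' n > t`, and the theorem follows. To find `t`, the code `h` needs the number of halting codes
of length at most `n / 2`, that is, about `n / 2` bits of information, besides advice of
logarithmic size. The difficulty is that the code numbering is far from optimal as a description
system: it is not clear how many bits a code of length `s` can carry in a usable form, and concrete
estimates have to be replaced by an intrinsic comparison between lengths `s` and `2 * s`.

*Upper bound on capacity.* A finite set of codes is sequentially distinguishable (`SD`) if adaptive
queries, each of them defined on all remaining candidates, identify its members; `tau X` is the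
largest size of such a set among codes with number below `X`. Answers of `pair a b`, `comp a b`,
`prec a b` are determined by answers of `a` and `b`, and `encode (pair a b)` is about
`4 * max (encode a) (encode b) ^ 2`, hence `tau (4 * V ^ 2 + 3)` is at most `tau V ^ 2` up to a
logarithmic factor (`tau_le_sq`). So codes of length `s` are distinguishable in about `n / 2` bits,
and `k` constructors further down (`lev k s`) in about `n / 2 ^ (k + 1)` bits (`le_bits`).

*Lower bound on usable capacity.* `Carry X m` says that codes below `X` compute any target with
`m` bits of information and small advice. Composition doubles the carried information
(`Carry.double`). Knowing that `2 ^ ℓ` codes below `X` are distinguishable, a strategy identifying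
them can be found by search, and a code `runner` of five more constructors, which runs that strategy
inside a primitive recursion, exploits them: its five other subcodes, one on each level, carry
`m`, `2 * m`, `4 * m`, `8 * m`, `16 * m` bits, and the distinguishable one carries `ℓ` bits
(`Carry.step`). Since the capacity at that level is
about `n / 64`, the deficit shrinks by the factor `31 / 32` with each step, and 219 steps yield
more than `255 / 512 * n` usable bits at length `s` (`exists_carry`).

*Closing the gap.* Halting is not affected by rewriting `pair zero zero`, `comp zero zero`,
`prec zero zero` to `zero` and `rfind' zero` to `right`, and the number of rewritten codes of length
at most `L` is at most `2 ^ (255 / 256 * L)` (`redNum_two_pow`). Counting normal forms instead of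
codes, the number of halting codes of length at most `n / 2` is described by `255 / 512 * n` bits,
which `h` can carry (`exists_witness`). The constant `c` of the theorem only has to rule out the
finitely many small values of `n`.
-/

open Nat.Partrec (Code)

/-- The length of a code: the number of binary digits of its code number. -/
def codeLength (e : Nat.Partrec.Code) : ℕ := Nat.size (Encodable.encode e)

/-- Plain Kolmogorov complexity of `x : ℕ`: the least `ℓ` such that some code `e`
of length `≤ ℓ` outputs `x` (on input `0`). -/
noncomputable def K (x : ℕ) : ℕ :=
  sInf {ℓ : ℕ | ∃ e : Nat.Partrec.Code, codeLength e ≤ ℓ ∧ e.eval 0 = Part.some x}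

/-- Time-bounded Kolmogorov complexity of `x : ℕ` with time bound `t`: the least `ℓ`
such that some code `e` of length `≤ ℓ` outputs `x` within `t` steps, and `⊤` if
there is no such code. -/
noncomputable def Kt (t : ℕ) (x : ℕ) : ℕ∞ :=
  sInf {ℓ : ℕ∞ | ∃ e : Nat.Partrec.Code,
    (codeLength e : ℕ∞) ≤ ℓ ∧ Nat.Partrec.Code.evaln t e 0 = some x}

/-- `Tn n`: the least time `T` at which the time-bounded complexity of all strings of
length at most `n` (i.e. all `x < 2 ^ n`) equals the true complexity. -/
noncomputable def Tn (n : ℕ) : ℕ :=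
  sInf {T : ℕ | ∀ x < 2 ^ n, Kt T x = (K x : ℕ∞)}

/-- `Tn' n`: the least time `T` at which the time-bounded complexity of all strings of
length at most `n` is at most twice the true complexity. -/
noncomputable def Tn' (n : ℕ) : ℕ :=
  sInf {T : ℕ | ∀ x < 2 ^ n, Kt T x ≤ 2 * (K x : ℕ∞)}

namespace ShortHalt

open Encodable Denumerable Filter

/-! ### Sequentially distinguishable families -/

lemma eval_comp_of {A B : Code} {y v : ℕ} (h : B.eval y = Part.some v) :
    (Code.comp A B).eval y = A.eval v := by
  change B.eval y >>= A.eval = _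
  rw [h]
  exact Part.bind_some _ _

/-- The finite family `F`, indexed by `T`, admits no splitting query: whenever all members are
defined at `y`, they take the same value there. -/
def Agree {ι : Type} (T : Finset ι) (F : ι → Code) : Prop :=
  ∀ y, (∀ p ∈ T, ((F p).eval y).Dom) → ∀ p ∈ T, ∀ q ∈ T, (F p).eval y = (F q).eval y

section Agree

variable {ι : Type} {T : Finset ι} {A B : ι → Code}

lemma agree_pair (hA : Agree T A) (hB : Agree T B) :
    Agree T (fun p => Code.pair (A p) (B p)) := by
  intro y hd p hp q hq
  have h1 : ∀ p ∈ T, ((A p).eval y).Dom := by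
    intro p hp
    have := hd p hp
    simp only [Code.eval, Seq.seq, Part.map_eq_map, Part.bind_dom] at this
    exact this.1
  have h2 : ∀ p ∈ T, ((B p).eval y).Dom := by
    intro p hp
    have := hd p hp
    simp only [Code.eval, Seq.seq, Part.map_eq_map, Part.bind_dom] at this
    exact this.2
  simp only [Code.eval, hA y h1 p hp q hq, hB y h2 p hp q hq]

lemma agree_comp (hA : Agree T A) (hB : Agree T B) :
    Agree T (fun p => Code.comp (A p) (B p)) := by
  intro y hd p hp q hq
  have h1 : ∀ p ∈ T, ((B p).eval y).Dom := by
    intro p hp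
    have := hd p hp
    simp only [Code.eval] at this
    exact (Part.bind_dom.1 this).1
  have e := hB y h1
  obtain ⟨v, hv⟩ := Part.dom_iff_mem.1 (h1 p hp)
  have hv' : ∀ r ∈ T, (B r).eval y = Part.some v := fun r hr => by
    rw [e r hr p hp]; exact Part.eq_some_iff.2 hv
  have h2 : ∀ r ∈ T, ((A r).eval v).Dom := by
    intro r hr
    have := hd r hr
    rwa [eval_comp_of (hv' r hr)] at this
  simp only [eval_comp_of (hv' p hp), eval_comp_of (hv' q hq)]
  exact hA v h2 p hp q hq

lemma agree_prec (hA : Agree T A) (hB : Agree T B) :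
    Agree T (fun p => Code.prec (A p) (B p)) := by
  intro y
  obtain ⟨a, n, rfl⟩ : ∃ a n, Nat.pair a n = y := ⟨_, _, Nat.pair_unpair y⟩
  induction n with
  | zero =>
    intro hd p hp q hq
    simp only [Code.eval_prec_zero] at hd ⊢
    exact hA a hd p hp q hq
  | succ n ih =>
    intro hd p hp q hq
    simp only [Code.eval_prec_succ] at hd ⊢
    have h1 : ∀ p ∈ T, ((Code.prec (A p) (B p)).eval (Nat.pair a n)).Dom := fun p hp =>
      (Part.bind_dom.1 (hd p hp)).1
    have e := ih h1
    obtain ⟨v, hv⟩ := Part.dom_iff_mem.1 (h1 p hp)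
    have hv' : ∀ r ∈ T, (Code.prec (A r) (B r)).eval (Nat.pair a n) = Part.some v :=
      fun r hr => by
        rw [e r hr p hp]; exact Part.eq_some_iff.2 hv
    have h2 : ∀ r ∈ T, ((B r).eval (Nat.pair a (Nat.pair n v))).Dom := by
      intro r hr
      have := hd r hr
      rw [hv' r hr] at this
      simpa using this
    rw [hv' p hp, hv' q hq]
    simpa using hB _ h2 p hp q hq

lemma mem_eval_rfind' {c : Code} {a m x : ℕ} :
    x ∈ (Code.rfind' c).eval (Nat.pair a m) ↔
      ∃ k, x = k + m ∧ 0 ∈ c.eval (Nat.pair a (k + m)) ∧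
        ∀ j < k, ∃ v, v ≠ 0 ∧ v ∈ c.eval (Nat.pair a (j + m)) := by
  simp only [Code.eval, Nat.unpaired, Nat.unpair_pair, Part.mem_map_iff]
  constructor
  · rintro ⟨k, hk, rfl⟩
    obtain ⟨h1, h2⟩ := Nat.mem_rfind.1 hk
    refine ⟨k, rfl, by simpa using h1, fun j hj => ?_⟩
    have := h2 hj
    simpa [Part.mem_map_iff, and_comm] using this
  · rintro ⟨k, rfl, h1, h2⟩
    refine ⟨k, Nat.mem_rfind.2 ⟨by simpa using h1, fun {j} hj => ?_⟩, rfl⟩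
    obtain ⟨v, hv⟩ := h2 j hj
    exact (Part.mem_map_iff _).2 ⟨v, hv.2, by simpa using hv.1⟩

lemma agree_rfind (hA : Agree T A) : Agree T (fun p => Code.rfind' (A p)) := by
  intro y
  obtain ⟨a, m, rfl⟩ : ∃ a n, Nat.pair a n = y := ⟨_, _, Nat.pair_unpair y⟩
  intro hd p hp q hq
  have h1 : ∀ r, r ∈ T → ∃ k, 0 ∈ (A r).eval (Nat.pair a (k + m)) ∧
      ∀ j < k, ∃ v, v ≠ 0 ∧ v ∈ (A r).eval (Nat.pair a (j + m)) := by
    intro r hr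
    obtain ⟨x, hx⟩ := Part.dom_iff_mem.1 (hd r hr)
    obtain ⟨k, -, h⟩ := mem_eval_rfind'.1 hx
    exact ⟨k, h⟩
  choose! k hk using h1
  -- The member whose search ends first forces every other search to end there as well.
  obtain ⟨r0, hr0, hmin⟩ := T.exists_min_image k ⟨p, hp⟩
  have hdom : ∀ r ∈ T, ((A r).eval (Nat.pair a (k r0 + m))).Dom := by
    intro r hr
    rcases (hmin r hr).eq_or_lt with h | h
    · rw [h]; exact Part.dom_iff_mem.2 ⟨_, (hk r hr).1⟩
    · obtain ⟨v, -, hv⟩ := (hk r hr).2 _ h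
      exact Part.dom_iff_mem.2 ⟨_, hv⟩
  have hall : ∀ r ∈ T, k r = k r0 := by
    intro r hr
    by_contra hne
    have hlt := lt_of_le_of_ne (hmin r hr) (Ne.symm hne)
    obtain ⟨v, hv0, hv⟩ := (hk r hr).2 _ hlt
    have h0 := (hk r0 hr0).1
    rw [← hA _ hdom r hr r0 hr0] at h0
    exact hv0 (Part.mem_unique hv h0)
  have hval : ∀ r ∈ T, (Code.rfind' (A r)).eval (Nat.pair a m) = Part.some (k r0 + m) := by
    intro r hr
    refine Part.eq_some_iff.2 (mem_eval_rfind'.2 ⟨k r, by rw [hall r hr], hk r hr⟩)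
  rw [hval p hp, hval q hq]

end Agree

/-- A finite set of codes is *sequentially distinguishable* if every subset with at least two
elements has a query at which all its members are defined, with at least two different values.
Equivalently, an adaptive sequence of such queries identifies each member. -/
def SD (S : Finset Code) : Prop := ∀ T ⊆ S, 2 ≤ T.card → ¬ Agree T id

lemma SD.mono {S S' : Finset Code} (h : SD S) (hs : S' ⊆ S) : SD S' :=
  fun T hT hc => h T (hT.trans hs) hc

lemma SD.of_card_le_one {S : Finset Code} (h : S.card ≤ 1) : SD S := fun T hT hc => by
  have := Finset.card_le_card hT
  omega

open Classical in
/-- The largest size of a sequentially distinguishable subset of `A`. -/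
noncomputable def sdNum (A : Finset Code) : ℕ := (A.powerset.filter SD).sup Finset.card

lemma le_sdNum {A S : Finset Code} (hS : SD S) (h : S ⊆ A) : S.card ≤ sdNum A := by
  classical
  exact Finset.le_sup (f := Finset.card) (Finset.mem_filter.2 ⟨Finset.mem_powerset.2 h, hS⟩)

lemma exists_sdNum (A : Finset Code) : ∃ S ⊆ A, SD S ∧ S.card = sdNum A := by
  classical
  have hne : (A.powerset.filter SD).Nonempty :=
    ⟨∅, Finset.mem_filter.2 ⟨by simp, SD.of_card_le_one (by simp)⟩⟩
  obtain ⟨S, hS, h⟩ := Finset.exists_mem_eq_sup _ hne Finset.card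
  rw [Finset.mem_filter, Finset.mem_powerset] at hS
  exact ⟨S, hS.1, hS.2, h.symm⟩

lemma sdNum_mono {A B : Finset Code} (h : A ⊆ B) : sdNum A ≤ sdNum B := by
  obtain ⟨S, hS, hsd, hc⟩ := exists_sdNum A
  rw [← hc]; exact le_sdNum hsd (hS.trans h)

lemma sdNum_le_card (A : Finset Code) : sdNum A ≤ A.card := by
  obtain ⟨S, hS, hsd, hc⟩ := exists_sdNum A
  rw [← hc]; exact Finset.card_le_card hS

lemma sdNum_pos {A : Finset Code} (h : A.Nonempty) : 1 ≤ sdNum A := by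
  obtain ⟨c, hc⟩ := h
  have := le_sdNum (A := A) (S := {c}) (SD.of_card_le_one (by simp)) (by simpa using hc)
  simpa using this

/-- A query at which all members of `A` are defined splits `A` into fibres, and the union of
sequentially distinguishable subsets of the fibres is again sequentially distinguishable. -/
lemma sum_sdNum_le {A : Finset Code} {y : ℕ} (hd : ∀ c ∈ A, (c.eval y).Dom)
    (V : Finset (Part ℕ)) (Av : Part ℕ → Finset Code)
    (hAv : ∀ v ∈ V, ∀ c ∈ Av v, c ∈ A ∧ c.eval y = v) :
    ∑ v ∈ V, sdNum (Av v) ≤ sdNum A := by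
  classical
  choose S hS hsd hcard using fun v => exists_sdNum (Av v)
  have hdisj : ∀ v ∈ V, ∀ w ∈ V, v ≠ w → Disjoint (S v) (S w) := by
    intro v hv w hw hne
    rw [Finset.disjoint_left]
    intro c h1 h2
    exact hne ((hAv v hv c (hS v h1)).2.symm.trans (hAv w hw c (hS w h2)).2)
  have : (V.biUnion S).card = ∑ v ∈ V, sdNum (Av v) := by
    rw [Finset.card_biUnion hdisj]
    exact Finset.sum_congr rfl fun v _ => hcard v
  rw [← this]
  refine le_sdNum ?_ ?_
  · intro T hT hc hag
    have hTA : ∀ c ∈ T, c ∈ A := fun c hc => by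
      obtain ⟨v, hv, hcv⟩ := Finset.mem_biUnion.1 (hT hc)
      exact (hAv v hv c (hS v hcv)).1
    have heq := hag y fun c hc => hd c (hTA c hc)
    obtain ⟨c0, hc0⟩ : T.Nonempty := Finset.card_pos.1 (by omega)
    obtain ⟨v, hv, hcv⟩ := Finset.mem_biUnion.1 (hT hc0)
    refine hsd v T (fun c hcT => ?_) hc hag
    obtain ⟨w, hw, hcw⟩ := Finset.mem_biUnion.1 (hT hcT)
    have : w = v := by
      rw [← (hAv w hw c (hS w hcw)).2, ← (hAv v hv c0 (hS v hcv)).2]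
      exact heq c hcT c0 hc0
    rwa [← this]
  · intro c hc
    obtain ⟨v, hv, hcv⟩ := Finset.mem_biUnion.1 hc
    exact (hAv v hv c (hS v hcv)).1

open Classical in
/-- A set of pairs of codes that can be identified by adaptive queries to either coordinate is no
larger than the product of the distinguishable sizes of its two projections. -/
lemma card_le_sdNum_mul (S : Finset (Code × Code))
    (hS : ∀ T ⊆ S, 2 ≤ T.card → ¬ (Agree T Prod.fst ∧ Agree T Prod.snd)) :
    S.card ≤ sdNum (S.image Prod.fst) * sdNum (S.image Prod.snd) := by
  induction S using Finset.strongInduction with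
  | H S ih =>
  rcases S.eq_empty_or_nonempty with rfl | hne
  · simp
  by_cases h2 : 2 ≤ S.card
  swap
  · have h1 := sdNum_pos (hne.image Prod.fst)
    have h1' := sdNum_pos (hne.image Prod.snd)
    calc S.card ≤ 1 * 1 := by omega
      _ ≤ _ := Nat.mul_le_mul h1 h1'
  have key : ∀ (f : Code × Code → Code), ¬ Agree S f → ∃ y, (∀ p ∈ S, ((f p).eval y).Dom) ∧
      ∀ v, S.filter (fun p => (f p).eval y = v) ⊂ S := by
    intro f hf
    simp only [Agree, not_forall] at hf
    obtain ⟨y, hd, p, hp, q, hq, hne⟩ := hf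
    refine ⟨y, hd, fun v => ?_⟩
    rw [Finset.filter_ssubset]
    by_cases hv : (f p).eval y = v
    · exact ⟨q, hq, fun h => hne (hv.trans h.symm)⟩
    · exact ⟨p, hp, hv⟩
  have hsplit := hS S subset_rfl h2
  rw [not_and_or] at hsplit
  rcases hsplit with h | h
  · obtain ⟨y, hd, hlt⟩ := key _ h
    set V := S.image (fun p => p.1.eval y)
    calc S.card = ∑ v ∈ V, (S.filter (fun p => p.1.eval y = v)).card :=
          Finset.card_eq_sum_card_fiberwise fun p hp => Finset.mem_image_of_mem _ hp
      _ ≤ ∑ v ∈ V, sdNum ((S.filter (fun p => p.1.eval y = v)).image Prod.fst) *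
            sdNum (S.image Prod.snd) := Finset.sum_le_sum fun v _ =>
          (ih _ (hlt v) fun T hT => hS T (hT.trans (Finset.filter_subset _ _))).trans
            (Nat.mul_le_mul_left _ (sdNum_mono (Finset.image_subset_image
              (Finset.filter_subset _ _))))
      _ ≤ _ := by
          rw [← Finset.sum_mul]
          refine Nat.mul_le_mul_right _ (sum_sdNum_le (y := y) ?_ V _ ?_)
          · intro c hc
            obtain ⟨p, hp, rfl⟩ := Finset.mem_image.1 hc
            exact hd p hp
          · intro v _ c hc
            obtain ⟨p, hp, rfl⟩ := Finset.mem_image.1 hc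
            rw [Finset.mem_filter] at hp
            exact ⟨Finset.mem_image_of_mem _ hp.1, hp.2⟩
  · obtain ⟨y, hd, hlt⟩ := key _ h
    set V := S.image (fun p => p.2.eval y)
    calc S.card = ∑ v ∈ V, (S.filter (fun p => p.2.eval y = v)).card :=
          Finset.card_eq_sum_card_fiberwise fun p hp => Finset.mem_image_of_mem _ hp
      _ ≤ ∑ v ∈ V, sdNum (S.image Prod.fst) *
            sdNum ((S.filter (fun p => p.2.eval y = v)).image Prod.snd) :=
          Finset.sum_le_sum fun v _ =>
          (ih _ (hlt v) fun T hT => hS T (hT.trans (Finset.filter_subset _ _))).trans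
            (Nat.mul_le_mul_right _ (sdNum_mono (Finset.image_subset_image
              (Finset.filter_subset _ _))))
      _ ≤ _ := by
          rw [← Finset.mul_sum]
          refine Nat.mul_le_mul_left _ (sum_sdNum_le (y := y) ?_ V _ ?_)
          · intro c hc
            obtain ⟨p, hp, rfl⟩ := Finset.mem_image.1 hc
            exact hd p hp
          · intro v _ c hc
            obtain ⟨p, hp, rfl⟩ := Finset.mem_image.1 hc
            rw [Finset.mem_filter] at hp
            exact ⟨Finset.mem_image_of_mem _ hp.1, hp.2⟩

/-! ### Distinguishable codes below a bound -/

open Classical in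
/-- The codes with code number below `X`. -/
noncomputable def codesBelow (X : ℕ) : Finset Code := (Finset.range X).image (ofNat Code)

lemma mem_codesBelow {X : ℕ} {c : Code} : c ∈ codesBelow X ↔ encode c < X := by
  simp only [codesBelow, Finset.mem_image, Finset.mem_range]
  constructor
  · rintro ⟨a, ha, rfl⟩; simpa using ha
  · intro h; exact ⟨encode c, h, by simp⟩

/-- The largest size of a sequentially distinguishable set of codes with code number below `X`. -/
noncomputable def tau (X : ℕ) : ℕ := sdNum (codesBelow X)

lemma tau_mono {X Y : ℕ} (h : X ≤ Y) : tau X ≤ tau Y :=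
  sdNum_mono fun _ hc => mem_codesBelow.2 ((mem_codesBelow.1 hc).trans_le h)

lemma card_le_tau {X : ℕ} {S : Finset Code} (hS : SD S) (h : ∀ c ∈ S, encode c < X) :
    S.card ≤ tau X :=
  le_sdNum hS fun c hc => mem_codesBelow.2 (h c hc)

lemma tau_zero : tau 0 = 0 := by
  have := sdNum_le_card (codesBelow 0)
  simpa [tau, codesBelow] using this

lemma tau_pos {X : ℕ} (h : 0 < X) : 1 ≤ tau X :=
  sdNum_pos ⟨Code.zero, mem_codesBelow.2 h⟩

lemma tau_succ_le (X : ℕ) : tau (X + 1) ≤ tau X + 1 := by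
  classical
  obtain ⟨S, hS, hsd, hc⟩ := exists_sdNum (codesBelow (X + 1))
  have h1 : (S.erase (ofNat Code X)).card ≤ tau X := by
    refine card_le_tau (hsd.mono (Finset.erase_subset _ _)) fun c hc => ?_
    rw [Finset.mem_erase] at hc
    have h2 := mem_codesBelow.1 (hS hc.2)
    have h3 : encode c ≠ X := fun h => hc.1 (by rw [← h]; simp)
    omega
  have h2 := Finset.pred_card_le_card_erase (s := S) (a := ofNat Code X)
  rw [tau, ← hc]
  omega

lemma pair_lt_sq {a b V : ℕ} (h : Nat.pair a b < V ^ 2) : a < V ∧ b < V := by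
  have h1 := Nat.max_sq_add_min_le_pair a b
  have h2 : max a b < V := by
    by_contra hc
    have := Nat.pow_le_pow_left (not_lt.1 hc) 2
    omega
  exact max_lt_iff.1 h2

lemma encode_pair (a b : Code) : encode (Code.pair a b) = 4 * Nat.pair (encode a) (encode b) + 4 := by
  simp only [Code.encodeCode_eq, Code.encodeCode]; ring

lemma encode_comp (a b : Code) : encode (Code.comp a b) = 4 * Nat.pair (encode a) (encode b) + 6 := by
  simp only [Code.encodeCode_eq, Code.encodeCode]; ring

lemma encode_prec (a b : Code) : encode (Code.prec a b) = 4 * Nat.pair (encode a) (encode b) + 5 := by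
  simp only [Code.encodeCode_eq, Code.encodeCode]; ring

lemma encode_rfind (a : Code) : encode (Code.rfind' a) = 4 * encode a + 7 := by
  simp only [Code.encodeCode_eq, Code.encodeCode]; ring

open Classical in
/-- In a distinguishable set, the codes whose root is a given binary constructor `N` are
identified by queries to the two children. -/
lemma card_node_le {N : Code → Code → Code}
    (hinj : ∀ {a b a' b'}, N a b = N a' b' → a = a' ∧ b = b')
    (hag : ∀ (T : Finset (Code × Code)), Agree T Prod.fst → Agree T Prod.snd →
      Agree T (fun p => N p.1 p.2))
    {V : ℕ} {S : Finset Code} (hS : SD S)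
    (hlt : ∀ a b, N a b ∈ S → encode a < V ∧ encode b < V) :
    (S.filter (fun c => ∃ a b, c = N a b)).card ≤ tau V ^ 2 := by
  set P : Finset (Code × Code) :=
    (codesBelow V ×ˢ codesBelow V).filter (fun p => N p.1 p.2 ∈ S)
  have himg : S.filter (fun c => ∃ a b, c = N a b) ⊆ P.image (fun p => N p.1 p.2) := by
    intro c hc
    obtain ⟨hcS, a, b, rfl⟩ := Finset.mem_filter.1 hc
    refine Finset.mem_image.2 ⟨(a, b), Finset.mem_filter.2 ⟨?_, hcS⟩, rfl⟩
    exact Finset.mem_product.2 ⟨mem_codesBelow.2 (hlt a b hcS).1, mem_codesBelow.2 (hlt a b hcS).2⟩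
  have hI : Function.Injective (fun p : Code × Code => N p.1 p.2) := by
    rintro ⟨a, b⟩ ⟨a', b'⟩ h
    obtain ⟨rfl, rfl⟩ := hinj h
    rfl
  calc _ ≤ (P.image (fun p => N p.1 p.2)).card := Finset.card_le_card himg
    _ ≤ P.card := Finset.card_image_le
    _ ≤ sdNum (P.image Prod.fst) * sdNum (P.image Prod.snd) := by
        refine card_le_sdNum_mul P fun T hT hc hA => ?_
        refine hS (T.image (fun p => N p.1 p.2)) ?_ ?_ ?_
        · intro c hc
          obtain ⟨p, hp, rfl⟩ := Finset.mem_image.1 hc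
          exact (Finset.mem_filter.1 (hT hp)).2
        · rwa [Finset.card_image_of_injective _ hI]
        · have h := hag T hA.1 hA.2
          intro y hd c hc c' hc'
          obtain ⟨p, hp, rfl⟩ := Finset.mem_image.1 hc
          obtain ⟨q, hq, rfl⟩ := Finset.mem_image.1 hc'
          exact h y (fun r hr => hd _ (Finset.mem_image_of_mem _ hr)) p hp q hq
    _ ≤ tau V * tau V := by
        refine Nat.mul_le_mul (sdNum_mono ?_) (sdNum_mono ?_)
        · intro c hc
          obtain ⟨p, hp, rfl⟩ := Finset.mem_image.1 hc
          exact (Finset.mem_product.1 (Finset.mem_filter.1 hp).1).1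
        · intro c hc
          obtain ⟨p, hp, rfl⟩ := Finset.mem_image.1 hc
          exact (Finset.mem_product.1 (Finset.mem_filter.1 hp).1).2
    _ = tau V ^ 2 := (sq _).symm

open Classical in
lemma card_rfind_le {Y : ℕ} {S : Finset Code} (hS : SD S) (hY : ∀ c ∈ S, encode c < Y) :
    (S.filter (fun c => ∃ a, c = Code.rfind' a)).card ≤ tau (Y / 4) := by
  set P : Finset Code := (codesBelow (Y / 4)).filter (fun p => Code.rfind' p ∈ S)
  have himg : S.filter (fun c => ∃ a, c = Code.rfind' a) ⊆ P.image Code.rfind' := by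
    intro c hc
    obtain ⟨hcS, a, rfl⟩ := Finset.mem_filter.1 hc
    refine Finset.mem_image.2 ⟨a, Finset.mem_filter.2 ⟨mem_codesBelow.2 ?_, hcS⟩, rfl⟩
    have := hY _ hcS
    rw [encode_rfind] at this
    omega
  have hI : Function.Injective Code.rfind' := fun a b h => by injection h
  calc _ ≤ (P.image Code.rfind').card := Finset.card_le_card himg
    _ ≤ P.card := Finset.card_image_le
    _ ≤ tau (Y / 4) := by
        refine card_le_tau ?_ fun c hc => mem_codesBelow.1 (Finset.mem_filter.1 hc).1
        intro T hT hc hA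
        refine hS (T.image Code.rfind') ?_ ?_ ?_
        · intro c hc
          obtain ⟨p, hp, rfl⟩ := Finset.mem_image.1 hc
          exact (Finset.mem_filter.1 (hT hp)).2
        · rwa [Finset.card_image_of_injective _ hI]
        · have h := agree_rfind hA
          intro y hd c hc c' hc'
          obtain ⟨p, hp, rfl⟩ := Finset.mem_image.1 hc
          obtain ⟨q, hq, rfl⟩ := Finset.mem_image.1 hc'
          exact h y (fun r hr => hd _ (Finset.mem_image_of_mem _ hr)) p hp q hq

lemma tau_rec {V Y : ℕ} (hY : Y ≤ 4 * V ^ 2 + 3) :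
    tau Y ≤ 4 + 3 * tau V ^ 2 + tau (Y / 4) := by
  classical
  obtain ⟨S, hS, hsd, hc⟩ := exists_sdNum (codesBelow Y)
  have hY' : ∀ c ∈ S, encode c < Y := fun c hc => mem_codesBelow.1 (hS hc)
  have h1 := card_node_le (N := Code.pair) (fun h => by injection h with h1 h2; exact ⟨h1, h2⟩)
    (fun T => agree_pair) (V := V) hsd fun a b h => by
      have := hY' _ h
      rw [encode_pair] at this
      exact pair_lt_sq (by omega)
  have h2 := card_node_le (N := Code.comp) (fun h => by injection h with h1 h2; exact ⟨h1, h2⟩)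
    (fun T => agree_comp) (V := V) hsd fun a b h => by
      have := hY' _ h
      rw [encode_comp] at this
      exact pair_lt_sq (by omega)
  have h3 := card_node_le (N := Code.prec) (fun h => by injection h with h1 h2; exact ⟨h1, h2⟩)
    (fun T => agree_prec) (V := V) hsd fun a b h => by
      have := hY' _ h
      rw [encode_prec] at this
      exact pair_lt_sq (by omega)
  have h4 := card_rfind_le hsd hY'
  have hsub : S ⊆ codesBelow 4 ∪ (S.filter (fun c => ∃ a b, c = Code.pair a b) ∪
      (S.filter (fun c => ∃ a b, c = Code.comp a b) ∪
      (S.filter (fun c => ∃ a b, c = Code.prec a b) ∪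
      S.filter (fun c => ∃ a, c = Code.rfind' a)))) := by
    intro c hc
    simp only [Finset.mem_union, Finset.mem_filter, hc, true_and, mem_codesBelow]
    cases c with
    | zero => exact Or.inl (by change 0 < 4; norm_num)
    | succ => exact Or.inl (by change 1 < 4; norm_num)
    | left => exact Or.inl (by change 2 < 4; norm_num)
    | right => exact Or.inl (by change 3 < 4; norm_num)
    | pair a b => exact Or.inr (Or.inl ⟨a, b, rfl⟩)
    | comp a b => exact Or.inr (Or.inr (Or.inl ⟨a, b, rfl⟩))
    | prec a b => exact Or.inr (Or.inr (Or.inr (Or.inl ⟨a, b, rfl⟩)))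
    | rfind' a => exact Or.inr (Or.inr (Or.inr (Or.inr ⟨a, rfl⟩)))
  have h5 := Finset.card_le_card hsub
  have h6 : (codesBelow 4).card ≤ 4 := Finset.card_image_le.trans (by simp)
  have u1 := Finset.card_union_le (codesBelow 4) (S.filter (fun c => ∃ a b, c = Code.pair a b) ∪
      (S.filter (fun c => ∃ a b, c = Code.comp a b) ∪
      (S.filter (fun c => ∃ a b, c = Code.prec a b) ∪
      S.filter (fun c => ∃ a, c = Code.rfind' a))))
  have u2 := Finset.card_union_le (S.filter (fun c => ∃ a b, c = Code.pair a b))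
      (S.filter (fun c => ∃ a b, c = Code.comp a b) ∪
      (S.filter (fun c => ∃ a b, c = Code.prec a b) ∪
      S.filter (fun c => ∃ a, c = Code.rfind' a)))
  have u3 := Finset.card_union_le (S.filter (fun c => ∃ a b, c = Code.comp a b))
      (S.filter (fun c => ∃ a b, c = Code.prec a b) ∪
      S.filter (fun c => ∃ a, c = Code.rfind' a))
  have u4 := Finset.card_union_le (S.filter (fun c => ∃ a b, c = Code.prec a b))
      (S.filter (fun c => ∃ a, c = Code.rfind' a))
  rw [tau, ← hc]
  omega

/-- Unfolding the unary constructor as well: one level of binary constructors at most squares the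
distinguishable size, up to a logarithmic factor. -/
lemma tau_le_sq {V : ℕ} (hV : 0 < V) : ∀ Y, Y ≤ 4 * V ^ 2 + 3 →
    tau Y ≤ Nat.size Y * (7 * tau V ^ 2) := by
  intro Y
  induction Y using Nat.strong_induction_on with
  | _ Y ih =>
  intro hY
  rcases Nat.eq_zero_or_pos Y with rfl | hpos
  · simp [tau_zero]
  have h1 := tau_rec hY
  have h2 := ih (Y / 4) (by omega) (by omega)
  have h3 : Nat.size (Y / 4) + 1 ≤ Nat.size Y := by
    rw [Nat.succ_le_iff, Nat.lt_size]
    rcases Nat.eq_zero_or_pos (Y / 4) with h | h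
    · rw [h]; simpa using Nat.succ_le_of_lt hpos
    · obtain ⟨k, hk⟩ : ∃ k, Nat.size (Y / 4) = k + 1 :=
        ⟨_, (Nat.succ_pred_eq_of_pos (Nat.size_pos.2 h)).symm⟩
      have : 2 ^ k ≤ Y / 4 := Nat.lt_size.1 (by omega)
      rw [hk, pow_succ]
      omega
  have h4 := tau_pos hV
  have h5 : 1 ≤ tau V ^ 2 := Nat.one_le_pow _ _ h4
  calc tau Y ≤ 7 * tau V ^ 2 + Nat.size (Y / 4) * (7 * tau V ^ 2) := by omega
    _ = (Nat.size (Y / 4) + 1) * (7 * tau V ^ 2) := by ring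
    _ ≤ _ := Nat.mul_le_mul_right _ h3

/-! ### A normal form for codes and the number of normal codes -/

lemma encode_zero : encode Code.zero = 0 := rfl

lemma encode_eq_zero {c : Code} : encode c = 0 ↔ c = Code.zero :=
  ⟨fun h => encode_injective (h.trans encode_zero.symm), fun h => h ▸ encode_zero⟩

/-- The normal form of a code: the codes `pair zero zero`, `comp zero zero`, `prec zero zero` are
rewritten to `zero`, and `rfind' zero` is rewritten to `right`, from the leaves upwards. -/
def nf : Code → Code
  | Code.zero => Code.zero
  | Code.succ => Code.succ
  | Code.left => Code.left
  | Code.right => Code.right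
  | Code.pair a b => if encode (nf a) + encode (nf b) = 0 then Code.zero else Code.pair (nf a) (nf b)
  | Code.comp a b => if encode (nf a) + encode (nf b) = 0 then Code.zero else Code.comp (nf a) (nf b)
  | Code.prec a b => if encode (nf a) + encode (nf b) = 0 then Code.zero else Code.prec (nf a) (nf b)
  | Code.rfind' a => if encode (nf a) = 0 then Code.right else Code.rfind' (nf a)

lemma eval_zero' (y : ℕ) : Code.zero.eval y = Part.some 0 := rfl

lemma eval_prec_congr {a a' b b' : Code} (ha : a.eval = a'.eval) (hb : b.eval = b'.eval) :
    (Code.prec a b).eval = (Code.prec a' b').eval := by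
  simp only [Code.eval, ha, hb]
  rfl

lemma eval_nf (c : Code) : (nf c).eval = c.eval := by
  induction c with
  | zero => rfl
  | succ => rfl
  | left => rfl
  | right => rfl
  | pair a b iha ihb =>
    simp only [nf]
    split_ifs with h
    · obtain ⟨h1, h2⟩ := Nat.add_eq_zero_iff.1 h
      simp only [Code.eval, ← iha, ← ihb, encode_eq_zero.1 h1, encode_eq_zero.1 h2]
      funext y
      simp [Seq.seq, pure, PFun.pure, Nat.pair]
    · simp only [Code.eval, iha, ihb]
      rfl
  | comp a b iha ihb =>
    simp only [nf]
    split_ifs with h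
    · obtain ⟨h1, h2⟩ := Nat.add_eq_zero_iff.1 h
      simp only [Code.eval, ← iha, ← ihb, encode_eq_zero.1 h1, encode_eq_zero.1 h2]
      funext y
      exact (Part.bind_some _ _).symm
    · simp only [Code.eval, iha, ihb]
      rfl
  | prec a b iha ihb =>
    simp only [nf]
    split_ifs with h
    · obtain ⟨h1, h2⟩ := Nat.add_eq_zero_iff.1 h
      rw [eval_prec_congr iha.symm ihb.symm, encode_eq_zero.1 h1, encode_eq_zero.1 h2]
      funext y
      obtain ⟨a, n, rfl⟩ : ∃ a n, Nat.pair a n = y := ⟨_, _, Nat.pair_unpair y⟩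
      induction n with
      | zero => rw [Code.eval_prec_zero]; rfl
      | succ n ih =>
        rw [Code.eval_prec_succ, ← ih, eval_zero', eval_zero']
        exact (Part.bind_some _ _).symm
    · exact eval_prec_congr iha ihb
  | rfind' a iha =>
    simp only [nf]
    split_ifs with h
    · have ha : a.eval = Code.zero.eval := by rw [← iha, encode_eq_zero.1 h]
      funext y
      obtain ⟨b, n, rfl⟩ : ∃ a n, Nat.pair a n = y := ⟨_, _, Nat.pair_unpair y⟩
      have : Code.right.eval (Nat.pair b n) = Part.some n := by simp [Code.eval]
      rw [this]
      refine (Part.eq_some_iff.2 (mem_eval_rfind'.2 ⟨0, by simp, ?_, by simp⟩)).symm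
      rw [ha, eval_zero']
      exact Part.mem_some _
    · simp only [Code.eval, iha]
      rfl

lemma primrec_nf : Primrec nf := by
  have h := Code.primrec_recOn (α := Code) (σ := Code) (c := id) Primrec.id
    (z := fun _ => Code.zero) (Primrec.const _) (s := fun _ => Code.succ) (Primrec.const _)
    (l := fun _ => Code.left) (Primrec.const _) (r := fun _ => Code.right) (Primrec.const _)
    (pr := fun _ _ _ x y => if encode x + encode y = 0 then Code.zero else Code.pair x y)
    (hpr := by
      refine Primrec.ite ?_ (Primrec.const _) ?_
      · exact Primrec.eq.comp (Primrec.nat_add.comp (Primrec.encode.comp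
          (Primrec.fst.comp (Primrec.snd.comp (Primrec.snd.comp Primrec.snd))))
          (Primrec.encode.comp (Primrec.snd.comp (Primrec.snd.comp (Primrec.snd.comp Primrec.snd)))))
          (Primrec.const 0)
      · exact Code.primrec₂_pair.comp
          (Primrec.fst.comp (Primrec.snd.comp (Primrec.snd.comp Primrec.snd)))
          (Primrec.snd.comp (Primrec.snd.comp (Primrec.snd.comp Primrec.snd))))
    (co := fun _ _ _ x y => if encode x + encode y = 0 then Code.zero else Code.comp x y)
    (hco := by
      refine Primrec.ite ?_ (Primrec.const _) ?_
      · exact Primrec.eq.comp (Primrec.nat_add.comp (Primrec.encode.comp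
          (Primrec.fst.comp (Primrec.snd.comp (Primrec.snd.comp Primrec.snd))))
          (Primrec.encode.comp (Primrec.snd.comp (Primrec.snd.comp (Primrec.snd.comp Primrec.snd)))))
          (Primrec.const 0)
      · exact Code.primrec₂_comp.comp
          (Primrec.fst.comp (Primrec.snd.comp (Primrec.snd.comp Primrec.snd)))
          (Primrec.snd.comp (Primrec.snd.comp (Primrec.snd.comp Primrec.snd))))
    (pc := fun _ _ _ x y => if encode x + encode y = 0 then Code.zero else Code.prec x y)
    (hpc := by
      refine Primrec.ite ?_ (Primrec.const _) ?_
      · exact Primrec.eq.comp (Primrec.nat_add.comp (Primrec.encode.comp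
          (Primrec.fst.comp (Primrec.snd.comp (Primrec.snd.comp Primrec.snd))))
          (Primrec.encode.comp (Primrec.snd.comp (Primrec.snd.comp (Primrec.snd.comp Primrec.snd)))))
          (Primrec.const 0)
      · exact Code.primrec₂_prec.comp
          (Primrec.fst.comp (Primrec.snd.comp (Primrec.snd.comp Primrec.snd)))
          (Primrec.snd.comp (Primrec.snd.comp (Primrec.snd.comp Primrec.snd))))
    (rf := fun _ _ x => if encode x = 0 then Code.right else Code.rfind' x)
    (hrf := by
      refine Primrec.ite ?_ (Primrec.const _) ?_
      · exact Primrec.eq.comp (Primrec.encode.comp (Primrec.snd.comp Primrec.snd)) (Primrec.const 0)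
      · exact Code.primrec_rfind'.comp (Primrec.snd.comp Primrec.snd))
  refine h.of_eq fun c => ?_
  simp only [id]
  induction c with
  | zero => rfl
  | succ => rfl
  | left => rfl
  | right => rfl
  | pair a b iha ihb => simp only [nf, iha, ihb]
  | comp a b iha ihb => simp only [nf, iha, ihb]
  | prec a b iha ihb => simp only [nf, iha, ihb]
  | rfind' a iha => simp only [nf, iha]

/-- Codes none of whose subterms can be rewritten by `nf`. -/
def Red : Code → Prop
  | Code.zero => True
  | Code.succ => True
  | Code.left => True
  | Code.right => True
  | Code.pair a b => Red a ∧ Red b ∧ (a, b) ≠ (Code.zero, Code.zero)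
  | Code.comp a b => Red a ∧ Red b ∧ (a, b) ≠ (Code.zero, Code.zero)
  | Code.prec a b => Red a ∧ Red b ∧ (a, b) ≠ (Code.zero, Code.zero)
  | Code.rfind' a => Red a ∧ a ≠ Code.zero

lemma ne_zero_zero {a b : Code} (h : ¬ encode a + encode b = 0) :
    (a, b) ≠ (Code.zero, Code.zero) := by
  rintro ⟨⟩
  exact h rfl

lemma red_nf (c : Code) : Red (nf c) := by
  induction c with
  | zero => trivial
  | succ => trivial
  | left => trivial
  | right => trivial
  | pair a b iha ihb =>
    simp only [nf]; split_ifs with h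
    · trivial
    · exact ⟨iha, ihb, ne_zero_zero h⟩
  | comp a b iha ihb =>
    simp only [nf]; split_ifs with h
    · trivial
    · exact ⟨iha, ihb, ne_zero_zero h⟩
  | prec a b iha ihb =>
    simp only [nf]; split_ifs with h
    · trivial
    · exact ⟨iha, ihb, ne_zero_zero h⟩
  | rfind' a iha =>
    simp only [nf]; split_ifs with h
    · trivial
    · exact ⟨iha, fun h' => h (encode_eq_zero.2 h')⟩

lemma pair_mono {a b a' b' : ℕ} (ha : a ≤ a') (hb : b ≤ b') : Nat.pair a b ≤ Nat.pair a' b' := by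
  rcases ha.eq_or_lt with rfl | ha
  · rcases hb.eq_or_lt with rfl | hb
    · rfl
    · exact (Nat.pair_lt_pair_right _ hb).le
  · rcases hb.eq_or_lt with rfl | hb
    · exact (Nat.pair_lt_pair_left _ ha).le
    · exact ((Nat.pair_lt_pair_left _ ha).trans (Nat.pair_lt_pair_right _ hb)).le

lemma encode_nf_le (c : Code) : encode (nf c) ≤ encode c := by
  induction c with
  | zero => exact le_rfl
  | succ => exact le_rfl
  | left => exact le_rfl
  | right => exact le_rfl
  | pair a b iha ihb =>
    have := pair_mono iha ihb
    simp only [nf]; split_ifs with h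
    · exact Nat.zero_le _
    · rw [encode_pair, encode_pair]; omega
  | comp a b iha ihb =>
    have := pair_mono iha ihb
    simp only [nf]; split_ifs with h
    · exact Nat.zero_le _
    · rw [encode_comp, encode_comp]; omega
  | prec a b iha ihb =>
    have := pair_mono iha ihb
    simp only [nf]; split_ifs with h
    · exact Nat.zero_le _
    · rw [encode_prec, encode_prec]; omega
  | rfind' a iha =>
    simp only [nf]; split_ifs with h
    · rw [encode_rfind]
      have : encode Code.right = 3 := rfl
      omega
    · rw [encode_rfind, encode_rfind]; omega

open Classical in
/-- The normal codes with code number below `X`. -/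
noncomputable def redBelow (X : ℕ) : Finset Code := (codesBelow X).filter Red

/-- The number of normal codes with code number below `X`. -/
noncomputable def redNum (X : ℕ) : ℕ := (redBelow X).card

lemma mem_redBelow {X : ℕ} {c : Code} : c ∈ redBelow X ↔ encode c < X ∧ Red c := by
  classical
  rw [redBelow, Finset.mem_filter, mem_codesBelow]

lemma redNum_mono {X Y : ℕ} (h : X ≤ Y) : redNum X ≤ redNum Y :=
  Finset.card_le_card fun _ hc =>
    mem_redBelow.2 ⟨(mem_redBelow.1 hc).1.trans_le h, (mem_redBelow.1 hc).2⟩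

lemma card_codesBelow_le (X : ℕ) : (codesBelow X).card ≤ X := by
  classical
  exact Finset.card_image_le.trans (by simp)

lemma redNum_le (X : ℕ) : redNum X ≤ X := by
  classical
  exact (Finset.card_filter_le _ _).trans (card_codesBelow_le X)

lemma redNum_le_sub {X : ℕ} (h : 8 ≤ X) : redNum X ≤ X - 4 := by
  classical
  have hsub : redBelow X ⊆ (Finset.range X \ Finset.Ico 4 8).image (ofNat Code) := by
    intro c hc
    obtain ⟨h1, h2⟩ := mem_redBelow.1 hc
    refine Finset.mem_image.2 ⟨encode c, ?_, by simp⟩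
    simp only [Finset.mem_sdiff, Finset.mem_range, h1, true_and, Finset.mem_Ico]
    rintro ⟨h3, h4⟩
    have hp : ∀ {a b : Code}, Nat.pair (encode a) (encode b) < 1 → (a, b) = (Code.zero, Code.zero) := by
      intro a b hab
      have := pair_lt_sq (V := 1) (by simpa using hab)
      rw [encode_eq_zero.1 (by omega : encode a = 0), encode_eq_zero.1 (by omega : encode b = 0)]
    cases c with
    | zero => exact absurd h3 (by decide)
    | succ => exact absurd h3 (by decide)
    | left => exact absurd h3 (by decide)
    | right => exact absurd h3 (by decide)
    | pair a b => rw [encode_pair] at h4; exact h2.2.2 (hp (by omega))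
    | comp a b => rw [encode_comp] at h4; exact h2.2.2 (hp (by omega))
    | prec a b => rw [encode_prec] at h4; exact h2.2.2 (hp (by omega))
    | rfind' a => rw [encode_rfind] at h4; exact h2.2 (encode_eq_zero.1 (by omega))
  refine (Finset.card_le_card hsub).trans (Finset.card_image_le.trans ?_)
  rw [Finset.card_sdiff_of_subset]
  · simp
  · intro x hx
    rw [Finset.mem_Ico] at hx
    exact Finset.mem_range.2 (by omega)

lemma redNum_rec {X Y : ℕ} (h8 : 8 ≤ Y) (hY : Y ≤ 4 * X ^ 2 + 3) :
    redNum Y ≤ 3 * redNum X ^ 2 + redNum ((Y - 4) / 4) := by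
  classical
  have hX : 0 < X := by
    rcases Nat.eq_zero_or_pos X with rfl | h
    · simp at hY; omega
    · exact h
  set P := (redBelow X ×ˢ redBelow X).erase (Code.zero, Code.zero)
  set Q := (redBelow ((Y - 4) / 4)).erase Code.zero
  have hz : ∀ {Z : ℕ}, 0 < Z → Code.zero ∈ redBelow Z := fun h => mem_redBelow.2 ⟨h, trivial⟩
  have hP : P.card + 1 = redNum X ^ 2 := by
    rw [Finset.card_erase_add_one (Finset.mem_product.2 ⟨hz hX, hz hX⟩), Finset.card_product, sq]
    rfl
  have hQ : Q.card + 1 = redNum ((Y - 4) / 4) :=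
    Finset.card_erase_add_one (hz (by omega))
  have hsub : redBelow Y ⊆ codesBelow 4 ∪ (P.image (fun p => Code.pair p.1 p.2) ∪
      (P.image (fun p => Code.comp p.1 p.2) ∪
      (P.image (fun p => Code.prec p.1 p.2) ∪ Q.image Code.rfind'))) := by
    intro c hc
    obtain ⟨h1, h2⟩ := mem_redBelow.1 hc
    have hmem : ∀ {a b : Code}, Nat.pair (encode a) (encode b) < X ^ 2 → Red a → Red b →
        (a, b) ≠ (Code.zero, Code.zero) → (a, b) ∈ P := by
      intro a b h ha hb hne
      exact Finset.mem_erase.2 ⟨hne, Finset.mem_product.2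
        ⟨mem_redBelow.2 ⟨(pair_lt_sq h).1, ha⟩, mem_redBelow.2 ⟨(pair_lt_sq h).2, hb⟩⟩⟩
    simp only [Finset.mem_union, mem_codesBelow]
    cases c with
    | zero => exact Or.inl (by change 0 < 4; norm_num)
    | succ => exact Or.inl (by change 1 < 4; norm_num)
    | left => exact Or.inl (by change 2 < 4; norm_num)
    | right => exact Or.inl (by change 3 < 4; norm_num)
    | pair a b =>
      rw [encode_pair] at h1
      exact Or.inr (Or.inl (Finset.mem_image.2
        ⟨(a, b), hmem (by omega) h2.1 h2.2.1 h2.2.2, rfl⟩))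
    | comp a b =>
      rw [encode_comp] at h1
      exact Or.inr (Or.inr (Or.inl (Finset.mem_image.2
        ⟨(a, b), hmem (by omega) h2.1 h2.2.1 h2.2.2, rfl⟩)))
    | prec a b =>
      rw [encode_prec] at h1
      exact Or.inr (Or.inr (Or.inr (Or.inl (Finset.mem_image.2
        ⟨(a, b), hmem (by omega) h2.1 h2.2.1 h2.2.2, rfl⟩))))
    | rfind' a =>
      rw [encode_rfind] at h1
      exact Or.inr (Or.inr (Or.inr (Or.inr (Finset.mem_image.2
        ⟨a, Finset.mem_erase.2 ⟨h2.2, mem_redBelow.2 ⟨by omega, h2.1⟩⟩, rfl⟩))))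
  have h5 := Finset.card_le_card hsub
  have h6 := card_codesBelow_le 4
  have u1 := Finset.card_union_le (codesBelow 4) (P.image (fun p => Code.pair p.1 p.2) ∪
      (P.image (fun p => Code.comp p.1 p.2) ∪
      (P.image (fun p => Code.prec p.1 p.2) ∪ Q.image Code.rfind')))
  have u2 := Finset.card_union_le (P.image (fun p => Code.pair p.1 p.2))
      (P.image (fun p => Code.comp p.1 p.2) ∪
      (P.image (fun p => Code.prec p.1 p.2) ∪ Q.image Code.rfind'))
  have u3 := Finset.card_union_le (P.image (fun p => Code.comp p.1 p.2))
      (P.image (fun p => Code.prec p.1 p.2) ∪ Q.image Code.rfind')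
  have u4 := Finset.card_union_le (P.image (fun p => Code.prec p.1 p.2)) (Q.image Code.rfind')
  have c1 := Finset.card_image_le (s := P) (f := fun p => Code.pair p.1 p.2)
  have c2 := Finset.card_image_le (s := P) (f := fun p => Code.comp p.1 p.2)
  have c3 := Finset.card_image_le (s := P) (f := fun p => Code.prec p.1 p.2)
  have c4 := Finset.card_image_le (s := Q) (f := Code.rfind')
  change (redBelow Y).card ≤ _
  omega

/-! ### Numerical bounds on the number of normal codes -/

/-- A lower approximation of the square root, computed bit by bit from `k` base-four digits. -/
def approxSqrt : ℕ → ℕ → ℕ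
  | 0, _ => 0
  | k + 1, t =>
    let r := 2 * approxSqrt k (t / 4)
    if (r + 1) ^ 2 ≤ t then r + 1 else r

/-- An upper bound for `redNum`, obtained by unfolding its recursion a bounded number of times. -/
def redBound : ℕ → ℕ → ℕ
  | 0, Y => Y
  | f + 1, Y =>
    if Y < 8 then min Y 4
    else
      let t := (Y - 4) / 4
      let X := approxSqrt 10 t + 1
      if Y ≤ 4 * X ^ 2 + 3 then min (Y - 4) (3 * redBound f X ^ 2 + redBound f t) else Y

lemma redNum_le_redBound : ∀ f Y, redNum Y ≤ redBound f Y
  | 0, Y => redNum_le Y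
  | f + 1, Y => by
    simp only [redBound]
    split_ifs with h1 h2
    · exact le_min (redNum_le Y) ((redNum_mono h1.le).trans (redNum_le_sub le_rfl))
    · refine le_min (redNum_le_sub (by omega)) ((redNum_rec (by omega) h2).trans ?_)
      have h3 := redNum_le_redBound f (approxSqrt 10 ((Y - 4) / 4) + 1)
      have h4 := redNum_le_redBound f ((Y - 4) / 4)
      gcongr
    · exact redNum_le Y

/-- Checks `8 * redBound Y' ≤ 7 * Y` along a geometric grid of pairs of neighbours `Y < Y'` that
starts at `Y` and reaches `20500`. -/
def gridCheck : ℕ → ℕ → Bool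
  | 0, Y => decide (20500 ≤ Y)
  | f + 1, Y =>
    decide (20500 ≤ Y) ||
      (decide (8 * redBound 8 (Y + 1 + Y / 100) ≤ 7 * Y) && gridCheck f (Y + 1 + Y / 100))

lemma of_gridCheck : ∀ f Y, gridCheck f Y = true → ∀ Z, Y ≤ Z → Z < 20500 →
    8 * redNum Z ≤ 7 * Z
  | 0, Y, h, Z, h1, h2 => by
    simp only [gridCheck, decide_eq_true_eq] at h; omega
  | f + 1, Y, h, Z, h1, h2 => by
    simp only [gridCheck, Bool.or_eq_true, Bool.and_eq_true, decide_eq_true_eq] at h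
    rcases h with h | ⟨h3, h4⟩
    · omega
    · rcases le_total Z (Y + 1 + Y / 100) with h5 | h5
      · have := (redNum_mono h5).trans (redNum_le_redBound 8 _)
        omega
      · exact of_gridCheck f _ h4 Z h5 h2

lemma gridCheck_true : gridCheck 600 70 = true := by decide +kernel

/-- The number of normal codes below `Y` is at most a power of `Y` with exponent less than one. -/
lemma redNum_le_rpow (Y : ℕ) : 70 ≤ Y →
    (redNum Y : ℝ) ≤ 15 / 16 * (Y : ℝ) ^ (255 / 256 : ℝ) := by
  induction Y using Nat.strong_induction_on with
  | _ Y ih =>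
  intro hY
  have h256 : ((256 : ℕ) : ℝ)⁻¹ = 1 / 256 := by norm_num
  have hY0 : (0 : ℝ) < Y := by exact_mod_cast (by omega : 0 < Y)
  rcases lt_or_ge Y 20500 with hlt | hge
  · have h1 : (8 * redNum Y : ℝ) ≤ 7 * Y := by
      exact_mod_cast of_gridCheck 600 70 gridCheck_true Y hY hlt
    have h2 : (Y : ℝ) ^ (1 / 256 : ℝ) ≤ 15 / 14 := by
      have h20 : (Y : ℝ) ≤ 20500 := by exact_mod_cast hlt.le
      have h21 : (Y : ℝ) ≤ (15 / 14 : ℝ) ^ 256 := h20.trans (by norm_num)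
      have h22 := Real.pow_rpow_inv_natCast (x := (15 / 14 : ℝ)) (n := 256) (by norm_num)
        (by decide)
      calc (Y : ℝ) ^ (1 / 256 : ℝ) ≤ ((15 / 14 : ℝ) ^ 256) ^ (1 / 256 : ℝ) := by
            apply Real.rpow_le_rpow hY0.le h21 (by norm_num)
        _ = 15 / 14 := by
            rwa [h256] at h22
    have h3 : (Y : ℝ) = (Y : ℝ) ^ (255 / 256 : ℝ) * (Y : ℝ) ^ (1 / 256 : ℝ) := by
      rw [← Real.rpow_add hY0]; norm_num
    have h4 : (0 : ℝ) ≤ (Y : ℝ) ^ (255 / 256 : ℝ) := by positivity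
    have h5 : (Y : ℝ) ≤ (Y : ℝ) ^ (255 / 256 : ℝ) * (15 / 14) := by
      conv_lhs => rw [h3]
      gcongr
    linarith
  · set t := (Y - 4) / 4 with ht
    set r := Nat.sqrt t with hr
    have hr71 : 71 ≤ r := Nat.le_sqrt.2 (by omega)
    have hrt : r * r ≤ t := Nat.sqrt_le t
    have htr : t < (r + 1) * (r + 1) := Nat.sqrt_lt.1 (Nat.lt_succ_self _)
    have hle : r ≤ r * r := Nat.le_mul_self r
    have hsq : (r + 1) ^ 2 = (r + 1) * (r + 1) := sq _
    have hrec := redNum_rec (X := r + 1) (Y := Y) (by omega) (by rw [hsq]; omega)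
    have h1 := ih (r + 1) (by omega) (by omega)
    have h2 := ih t (by omega) (by omega)
    rw [← ht] at hrec
    -- Both `(r + 1) ^ 2` and `t` are at most `κ * Y` with `κ` slightly above `1 / 4`.
    obtain ⟨κ, hκ⟩ : ∃ κ : ℝ, κ = (72 / 71) ^ 2 / 4 := ⟨_, rfl⟩
    have hr71' : (71 : ℝ) ≤ r := by exact_mod_cast hr71
    have h4t : (4 * t : ℝ) ≤ Y := by exact_mod_cast (by omega : 4 * t ≤ Y)
    have hrt' : ((r : ℝ) * r) ≤ t := by exact_mod_cast hrt
    have hκ0 : (0 : ℝ) < κ := by rw [hκ]; norm_num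
    have ha : ((r : ℝ) + 1) ^ 2 ≤ κ * Y := by
      have : (r : ℝ) + 1 ≤ 72 / 71 * r := by linarith only [hr71']
      calc ((r : ℝ) + 1) ^ 2 ≤ (72 / 71 * r) ^ 2 := by gcongr
        _ = κ * (4 * (r * r)) := by rw [hκ]; ring
        _ ≤ κ * Y := by gcongr; linarith only [hrt', h4t]
    have hb : (t : ℝ) ≤ κ * Y := by rw [hκ]; linarith only [h4t, hY0]
    have hκ1 : 61 / 16 * κ ^ (255 / 256 : ℝ) ≤ 1 := by
      have e1 : κ ^ (255 / 256 : ℝ) = (κ ^ 255) ^ (1 / 256 : ℝ) := by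
        rw [← Real.rpow_natCast, ← Real.rpow_mul hκ0.le]; norm_num
      have h22 := Real.pow_rpow_inv_natCast (x := (16 / 61 : ℝ)) (n := 256) (by norm_num)
        (by decide)
      have e2 : (κ ^ 255) ^ (1 / 256 : ℝ) ≤ ((16 / 61 : ℝ) ^ 256) ^ (1 / 256 : ℝ) := by
        apply Real.rpow_le_rpow (by positivity) _ (by norm_num)
        rw [hκ]; norm_num
      have e3 : ((16 / 61 : ℝ) ^ 256) ^ (1 / 256 : ℝ) = 16 / 61 := by
        rwa [h256] at h22
      rw [e1]; rw [e3] at e2; linarith only [e2]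
    have hF1 : (((r + 1 : ℕ) : ℝ) ^ (255 / 256 : ℝ)) ^ 2 ≤
        κ ^ (255 / 256 : ℝ) * (Y : ℝ) ^ (255 / 256 : ℝ) := by
      rw [← Real.mul_rpow hκ0.le hY0.le, ← Real.rpow_natCast, ← Real.rpow_mul (by positivity),
        mul_comm (255 / 256 : ℝ), Real.rpow_mul (by positivity), Real.rpow_natCast]
      push_cast
      exact Real.rpow_le_rpow (by positivity) ha (by norm_num)
    have hF2 : (t : ℝ) ^ (255 / 256 : ℝ) ≤ κ ^ (255 / 256 : ℝ) * (Y : ℝ) ^ (255 / 256 : ℝ) := by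
      rw [← Real.mul_rpow hκ0.le hY0.le]
      exact Real.rpow_le_rpow (by positivity) hb (by norm_num)
    have hrec' : (redNum Y : ℝ) ≤ 3 * (redNum (r + 1) : ℝ) ^ 2 + redNum t := by
      exact_mod_cast hrec
    have h1' : (redNum (r + 1) : ℝ) ^ 2 ≤
        (15 / 16) ^ 2 * (((r + 1 : ℕ) : ℝ) ^ (255 / 256 : ℝ)) ^ 2 := by
      rw [← mul_pow]; gcongr
    have hpos : (0 : ℝ) ≤ (Y : ℝ) ^ (255 / 256 : ℝ) := by positivity
    have h3 := mul_le_mul_of_nonneg_right hκ1 hpos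
    linarith only [h3, hrec', h1', h2, hF1, hF2]

lemma redNum_two_pow (L : ℕ) (hL : 7 ≤ L) : redNum (2 ^ L) ^ 256 ≤ 2 ^ (255 * L) := by
  have h70 : 70 ≤ 2 ^ L :=
    le_trans (by norm_num : 70 ≤ 2 ^ 7) (Nat.pow_le_pow_right (by norm_num) hL)
  have h := redNum_le_rpow (2 ^ L) h70
  have h0 : (0 : ℝ) ≤ ((2 ^ L : ℕ) : ℝ) ^ (255 / 256 : ℝ) := by positivity
  have h1 : (redNum (2 ^ L) : ℝ) ≤ ((2 ^ L : ℕ) : ℝ) ^ (255 / 256 : ℝ) := by linarith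
  have h2 : (redNum (2 ^ L) : ℝ) ^ 256 ≤ (((2 ^ L : ℕ) : ℝ) ^ (255 / 256 : ℝ)) ^ 256 := by gcongr
  have h3 : (((2 ^ L : ℕ) : ℝ) ^ (255 / 256 : ℝ)) ^ 256 = ((2 ^ (255 * L) : ℕ) : ℝ) := by
    rw [← Real.rpow_natCast, ← Real.rpow_mul (by positivity)]
    have : (255 / 256 * ((256 : ℕ) : ℝ)) = ((255 : ℕ) : ℝ) := by norm_num
    rw [this, Real.rpow_natCast]
    push_cast
    rw [← pow_mul, mul_comm]
  rw [h3] at h2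
  exact_mod_cast h2

/-! ### Short codes for numerals, and carriers of information -/

lemma exists_two_pow_between {b : ℕ} (hb : 1 ≤ b) : ∃ k, b ≤ 2 ^ k ∧ 2 ^ k ≤ 2 * b := by
  set k := Nat.clog 2 b
  have hk : b ≤ 2 ^ k := Nat.le_pow_clog (by norm_num) b
  have hk2 : 2 ^ k ≤ 2 * b := by
    rcases Nat.eq_zero_or_pos k with h0 | h0
    · rw [h0]; simp; omega
    · have hb2 : 1 < b := by
        by_contra hlt
        have : b = 1 := by omega
        simp [k, this] at h0
      have := Nat.pow_pred_clog_lt_self (b := 2) (by norm_num) hb2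
      have e : 2 ^ k = 2 * 2 ^ (k - 1) := by
        rw [← pow_succ']; congr 1; omega
      simp only [Nat.pred_eq_sub_one] at this
      change 2 ^ (k - 1) < b at this
      omega
  exact ⟨k, hk, hk2⟩

lemma exists_code_of_partrec {α σ : Type} [Primcodable α] [Primcodable σ] {f : α →. σ}
    (hf : Partrec f) : ∃ c : Code, ∀ a, c.eval (encode a) = (f a).map encode := by
  obtain ⟨c, hc⟩ := Code.exists_code.1 hf
  refine ⟨c, fun a => ?_⟩
  rw [hc]
  simp [encodek]

lemma exists_code_of_computable {α σ : Type} [Primcodable α] [Primcodable σ] {f : α → σ}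
    (hf : Computable f) : ∃ c : Code, ∀ a, c.eval (encode a) = Part.some (encode (f a)) := by
  obtain ⟨c, hc⟩ := exists_code_of_partrec (f := (f : α →. σ)) hf
  exact ⟨c, fun a => by rw [hc]; simp⟩

lemma pair_lt_sq_of_lt {a b V : ℕ} (ha : a < V) (hb : b < V) : Nat.pair a b < V ^ 2 := by
  have h := Nat.pair_lt_max_add_one_sq a b
  refine h.trans_le (Nat.pow_le_pow_left ?_ 2)
  have := max_lt ha hb
  omega

lemma encode_comp_lt {a b : Code} {V Y : ℕ} (ha : encode a < V) (hb : encode b < V)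
    (hY : 4 * V ^ 2 + 3 ≤ Y) : encode (Code.comp a b) < Y := by
  have := pair_lt_sq_of_lt ha hb
  rw [encode_comp]; omega

lemma encode_prec_lt {a b : Code} {V Y : ℕ} (ha : encode a < V) (hb : encode b < V)
    (hY : 4 * V ^ 2 + 3 ≤ Y) : encode (Code.prec a b) < Y := by
  have := pair_lt_sq_of_lt ha hb
  rw [encode_prec]; omega

/-- Balanced compositions of operations that shift in the bits of `w`: a number of `2 ^ k` bits can be
pushed by a code whose index has `O(2 ^ k)` bits. -/
lemma exists_push : ∃ N₀ : ℕ, 1 ≤ N₀ ∧ ∀ k, ∃ N, 1 ≤ N ∧ 8 * N ≤ (8 * N₀) ^ 2 ^ k ∧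
    ∀ w < 2 ^ 2 ^ k, ∃ u : Code, encode u < N ∧
      ∀ acc z, u.eval (Nat.pair acc z) = Part.some (Nat.pair (acc * 2 ^ 2 ^ k + w) z) := by
  have h0 : ∀ w : ℕ, ∃ u : Code, ∀ acc z,
      u.eval (Nat.pair acc z) = Part.some (Nat.pair (acc * 2 + w) z) := by
    intro w
    have hp : Primrec fun p : ℕ × ℕ => (p.1 * 2 + w, p.2) :=
      (Primrec.nat_add.comp (Primrec.nat_mul.comp Primrec.fst (Primrec.const 2))
        (Primrec.const w)).pair Primrec.snd
    obtain ⟨c, hc⟩ := exists_code_of_computable hp.to_comp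
    exact ⟨c, fun acc z => hc (acc, z)⟩
  obtain ⟨u0, hu0⟩ := h0 0
  obtain ⟨u1, hu1⟩ := h0 1
  refine ⟨encode u0 + encode u1 + 1, by omega, fun k => ?_⟩
  induction k with
  | zero =>
    refine ⟨encode u0 + encode u1 + 1, by omega, by simp, fun w hw => ?_⟩
    obtain rfl | rfl : w = 0 ∨ w = 1 := by simp at hw; omega
    · exact ⟨u0, by omega, by simpa using hu0⟩
    · exact ⟨u1, by omega, by simpa using hu1⟩
  | succ k ih =>
    obtain ⟨N, h1, h2, h3⟩ := ih
    refine ⟨4 * N ^ 2 + 3, by omega, ?_, fun w hw => ?_⟩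
    · rw [pow_succ 2 k, pow_mul]
      calc 8 * (4 * N ^ 2 + 3) ≤ (8 * N) ^ 2 := by nlinarith
        _ ≤ _ := Nat.pow_le_pow_left h2 2
    · have hB : 0 < 2 ^ 2 ^ k := by positivity
      have hBB : 2 ^ 2 ^ (k + 1) = 2 ^ 2 ^ k * 2 ^ 2 ^ k := by
        rw [pow_succ 2 k, pow_mul, sq]
      obtain ⟨u, hu, hu'⟩ := h3 (w % 2 ^ 2 ^ k) (Nat.mod_lt _ hB)
      obtain ⟨v, hv, hv'⟩ := h3 (w / 2 ^ 2 ^ k) (Nat.div_lt_of_lt_mul (by rwa [← hBB]))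
      refine ⟨Code.comp u v, encode_comp_lt hu hv le_rfl, fun acc z => ?_⟩
      rw [eval_comp_of (hv' _ _), hu', hBB]
      congr 2
      have := Nat.div_add_mod w (2 ^ 2 ^ k)
      rw [add_mul, mul_assoc, add_assoc]
      congr 1
      rw [mul_comm (w / _)]; exact this

/-- A number of `2 ^ k` bits can be put in front of the input by a code whose index has `O(2 ^ k)`
bits. -/
lemma exists_const_code : ∃ g : ℕ, 1 ≤ g ∧ ∀ k, ∀ w < 2 ^ 2 ^ k, ∃ u : Code,
    encode u < 2 ^ (g * 2 ^ k) ∧ ∀ z, u.eval z = Part.some (Nat.pair w z) := by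
  obtain ⟨N₀, hN₀, h⟩ := exists_push
  have hp : Primrec fun z : ℕ => ((0 : ℕ), z) := (Primrec.const 0).pair Primrec.id
  obtain ⟨c, hc⟩ := exists_code_of_computable hp.to_comp
  set g₁ := 8 * N₀ + encode c + 1 with hg₁
  refine ⟨2 * g₁ + 3, by omega, fun k w hw => ?_⟩
  obtain ⟨N, h1, h2, h3⟩ := h k
  obtain ⟨u, hu, hu'⟩ := h3 w hw
  have hk : 1 ≤ 2 ^ k := Nat.one_le_two_pow
  have hV : 8 * N₀ ≤ 2 ^ g₁ := (Nat.lt_two_pow_self).le.trans' (by omega)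
  have hV1 : N ≤ 2 ^ (g₁ * 2 ^ k) := by
    rw [pow_mul]
    have := h2.trans (Nat.pow_le_pow_left hV (2 ^ k))
    omega
  have hV2 : encode c < 2 ^ (g₁ * 2 ^ k) := by
    have : g₁ < 2 ^ g₁ := Nat.lt_two_pow_self
    have : 2 ^ g₁ ≤ 2 ^ (g₁ * 2 ^ k) := Nat.pow_le_pow_right (by norm_num) (by nlinarith)
    omega
  refine ⟨Code.comp u c, encode_comp_lt (hu.trans_le hV1) hV2 ?_, fun z => ?_⟩
  · have e : (2 * g₁ + 3) * 2 ^ k = g₁ * 2 ^ k * 2 + 3 * 2 ^ k := by ring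
    rw [e, pow_add, pow_mul _ (g₁ * 2 ^ k) 2]
    have h8 : 2 ^ 3 ≤ 2 ^ (3 * 2 ^ k) := Nat.pow_le_pow_right (by norm_num) (by omega)
    have h9 : 1 ≤ (2 ^ (g₁ * 2 ^ k)) ^ 2 := Nat.one_le_pow _ _ (by positivity)
    generalize 2 ^ (3 * 2 ^ k) = q at *
    generalize (2 ^ (g₁ * 2 ^ k)) ^ 2 = p at *
    nlinarith
  · have hc' : ∀ z, c.eval z = Part.some (Nat.pair 0 z) := hc
    rw [eval_comp_of (hc' z)]
    simpa using hu' 0 z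

lemma sd_of_eval_zero {S : Finset Code} {f : Code → ℕ} (h : ∀ c ∈ S, c.eval 0 = Part.some (f c))
    (hf : Set.InjOn f S) : SD S := by
  intro T hT hc ha
  obtain ⟨a, ha', b, hb', hab⟩ := Finset.one_lt_card.1 hc
  have := ha 0 (fun p hp => by rw [id, h p (hT hp)]; trivial) a ha' b hb'
  rw [id, id, h a (hT ha'), h b (hT hb'), Part.some_inj] at this
  exact hab (hf (hT ha') (hT hb') this)

/-- A lower bound for `tau`: at most linearly many bits are needed to get `b` bits of
distinguishable codes. -/
lemma exists_two_pow_le_tau : ∃ g : ℕ, 1 ≤ g ∧ ∀ b, 1 ≤ b → 2 ^ b ≤ tau (2 ^ (g * b)) := by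
  classical
  obtain ⟨g, hg, h⟩ := exists_const_code
  refine ⟨2 * g, by omega, fun b hb => ?_⟩
  obtain ⟨k, hk, hk2⟩ := exists_two_pow_between hb
  choose! u hu hu' using h k
  set W := Finset.range (2 ^ 2 ^ k)
  have hinj : Set.InjOn u W := by
    intro a ha b hb hab
    have h1 := hu' a (Finset.mem_range.1 ha) 0
    have h2 := hu' b (Finset.mem_range.1 hb) 0
    rw [hab, h2, Part.some_inj] at h1
    exact (Nat.pair_eq_pair.1 h1).1.symm
  have hS : SD (W.image u) := by
    refine sd_of_eval_zero (f := fun c => if hc : (c.eval 0).Dom then (c.eval 0).get hc else 0) ?_ ?_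
    · intro c hc
      obtain ⟨w, hw, rfl⟩ := Finset.mem_image.1 hc
      have := hu' w (Finset.mem_range.1 hw) 0
      simp [this]
    · intro c hc c' hc' he
      obtain ⟨w, hw, rfl⟩ := Finset.mem_image.1 hc
      obtain ⟨w', hw', rfl⟩ := Finset.mem_image.1 hc'
      have h1 := hu' w (Finset.mem_range.1 hw) 0
      have h2 := hu' w' (Finset.mem_range.1 hw') 0
      simp [h1, h2] at he
      rw [he]
  have h1 := card_le_tau (X := 2 ^ (g * 2 ^ k)) hS (by
    intro c hc
    obtain ⟨w, hw, rfl⟩ := Finset.mem_image.1 hc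
    exact hu w (Finset.mem_range.1 hw))
  rw [Finset.card_image_of_injOn hinj, Finset.card_range] at h1
  calc 2 ^ b ≤ 2 ^ 2 ^ k := Nat.pow_le_pow_right (by norm_num) hk
    _ ≤ _ := h1
    _ ≤ _ := tau_mono (Nat.pow_le_pow_right (by norm_num) (by nlinarith))

/-! ### Codes that carry information -/

/-- The universal function used to describe targets: `a` packs the index of a code together with
its advice, `i` is the information carried, `z` the input. -/
def univ (a i z : ℕ) : Part ℕ :=
  (ofNat Code a.unpair.1).eval (Nat.pair a.unpair.2 (Nat.pair i z))

lemma partrec_univ : Partrec fun p : ℕ × ℕ × ℕ => univ p.1 p.2.1 p.2.2 := by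
  have hu : Primrec fun p : ℕ × ℕ × ℕ => p.1.unpair := Primrec.unpair.comp Primrec.fst
  have h1 : Primrec fun p : ℕ × ℕ × ℕ => ofNat Code p.1.unpair.1 :=
    (Primrec.ofNat Code).comp (Primrec.fst.comp hu)
  have h2 : Primrec fun p : ℕ × ℕ × ℕ =>
      Nat.pair p.1.unpair.2 (Nat.pair p.2.1 p.2.2) :=
    Primrec₂.natPair.comp (Primrec.snd.comp hu)
      (Primrec₂.natPair.comp (Primrec.fst.comp Primrec.snd) (Primrec.snd.comp Primrec.snd))
  exact Code.eval_part.comp h1.to_comp h2.to_comp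

lemma univ_pair (c : Code) (α i z : ℕ) :
    univ (Nat.pair (encode c) α) i z = c.eval (Nat.pair α (Nat.pair i z)) := by
  rw [univ, Nat.unpair_pair, ofNat_encode]

attribute [irreducible] univ

lemma partrec_univ_comp {α : Type} [Primcodable α] {f g h : α → ℕ} (hf : Computable f)
    (hg : Computable g) (hh : Computable h) : Partrec fun a => univ (f a) (g a) (h a) :=
  partrec_univ.comp (hf.pair (hg.pair hh))

lemma map_encode_nat (p : Part ℕ) : p.map encode = p := Part.map_id' (fun _ => rfl) p

lemma primrec_two_pow : Primrec fun n : ℕ => 2 ^ n :=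
  (Primrec₂.unpaired'.1 Nat.Primrec.pow).comp (Primrec.const 2) Primrec.id

lemma primrec_two_pow_comp {α : Type} [Primcodable α] {f : α → ℕ} (hf : Primrec f) :
    Primrec fun a => 2 ^ f a :=
  Primrec.comp (f := fun n => 2 ^ n) primrec_two_pow hf

/-- `Carry X m`: codes below `X n` can hold `m n` bits of information. For every polynomially
bounded target `a` and every `i < 2 ^ m n`, some code below `X n` computes `univ a i`. -/
def Carry (X m : ℕ → ℕ) : Prop :=
  ∀ C : ℕ, ∀ᶠ n in atTop, ∀ a ≤ n ^ C, ∀ i < 2 ^ m n,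
    ∃ h : Code, encode h < X n ∧ ∀ z, h.eval z = univ a i z

/-- Eventual domination by a power of `n`. -/
def PolyB (f : ℕ → ℕ) : Prop := ∃ C : ℕ, ∀ᶠ n in atTop, f n ≤ n ^ C

lemma pair_le_pow {n a b C : ℕ} (hn : 2 ≤ n) (ha : a ≤ n ^ C) (hb : b ≤ n ^ C) :
    Nat.pair a b ≤ n ^ (2 * C + 2) := by
  have h := pair_lt_sq_of_lt (V := n ^ C + 1) (by omega : a < n ^ C + 1) (by omega : b < n ^ C + 1)
  have h1 : 1 ≤ n ^ C := Nat.one_le_pow _ _ (by omega)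
  have h2 : n ^ C + 1 ≤ n ^ (C + 1) := by rw [pow_succ]; nlinarith
  have h3 := Nat.pow_le_pow_left h2 2
  rw [← pow_mul] at h3
  have e : (C + 1) * 2 = 2 * C + 2 := by ring
  rw [e] at h3
  omega

lemma PolyB.pair {f g : ℕ → ℕ} (hf : PolyB f) (hg : PolyB g) :
    PolyB fun n => Nat.pair (f n) (g n) := by
  obtain ⟨C, hC⟩ := hf
  obtain ⟨D, hD⟩ := hg
  refine ⟨2 * (C + D) + 2, ?_⟩
  filter_upwards [hC, hD, eventually_ge_atTop 2] with n h1 h2 h3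
  exact pair_le_pow h3 (h1.trans (Nat.pow_le_pow_right (by omega) (by omega)))
    (h2.trans (Nat.pow_le_pow_right (by omega) (by omega)))

lemma PolyB.mono {f g : ℕ → ℕ} (hg : PolyB g) (h : ∀ᶠ n in atTop, f n ≤ g n) : PolyB f := by
  obtain ⟨C, hC⟩ := hg
  refine ⟨C, ?_⟩
  filter_upwards [hC, h] with n h1 h2 using h2.trans h1

lemma PolyB.add {f g : ℕ → ℕ} (hf : PolyB f) (hg : PolyB g) : PolyB fun n => f n + g n :=
  (hf.pair hg).mono (Eventually.of_forall fun _ => Nat.add_le_pair _ _)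

lemma PolyB.const (c : ℕ) : PolyB fun _ => c :=
  ⟨1, by filter_upwards [eventually_ge_atTop c] with n hn; simpa using hn⟩

lemma PolyB.id : PolyB fun n => n := ⟨1, Eventually.of_forall fun n => by simp⟩

lemma PolyB.const_mul {f : ℕ → ℕ} (c : ℕ) (hf : PolyB f) : PolyB fun n => c * f n := by
  obtain ⟨C, hC⟩ := hf
  refine ⟨C + 1, ?_⟩
  filter_upwards [hC, eventually_ge_atTop c] with n h1 h2
  rw [pow_succ, mul_comm]
  exact Nat.mul_le_mul h1 h2

lemma Carry.mono {X X' m m' : ℕ → ℕ} (H : Carry X m) (hX : ∀ᶠ n in atTop, X n ≤ X' n)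
    (hm : ∀ᶠ n in atTop, m' n ≤ m n) : Carry X' m' := by
  intro C
  filter_upwards [H C, hX, hm] with n h h1 h2 a ha i hi
  obtain ⟨c, hc, hc'⟩ := h a ha i (hi.trans_le (Nat.pow_le_pow_right (by norm_num) h2))
  exact ⟨c, hc.trans_le h1, hc'⟩

lemma Carry.use {X m : ℕ → ℕ} (H : Carry X m) {α β σ : Type} [Primcodable α] [Primcodable β]
    [Primcodable σ] {φ : α × ℕ × β →. σ} (hφ : Partrec φ) (C : ℕ) :
    ∀ᶠ n in atTop, ∀ a : α, encode a ≤ n ^ C → ∀ i < 2 ^ m n,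
      ∃ h : Code, encode h < X n ∧ ∀ z, h.eval (encode z) = (φ (a, i, z)).map encode := by
  obtain ⟨c, hc⟩ := exists_code_of_partrec hφ
  filter_upwards [H (2 * (C + 1) + 2), eventually_ge_atTop (encode c), eventually_ge_atTop 2]
    with n h hn hn2 a ha i hi
  have h1 : encode a ≤ n ^ (C + 1) := ha.trans (Nat.pow_le_pow_right (by omega) (by omega))
  have h2 : encode c ≤ n ^ (C + 1) := hn.trans (Nat.le_self_pow (by omega) n)
  obtain ⟨u, hu, hu'⟩ := h (Nat.pair (encode c) (encode a)) (pair_le_pow hn2 h2 h1) i hi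
  refine ⟨u, hu, fun z => ?_⟩
  rw [hu', univ_pair]
  exact hc (a, i, z)

lemma carry_base {X : ℕ → ℕ} (hX : ∀ D : ℕ, ∀ᶠ n in atTop, n ^ D ≤ X n) :
    Carry X fun _ => 0 := by
  obtain ⟨g, hg, hconst⟩ := exists_const_code
  have hp : Partrec fun p : ℕ × ℕ => univ p.1 0 p.2 :=
    partrec_univ_comp Computable.fst (Computable.const 0) Computable.snd
  obtain ⟨c, hc⟩ := exists_code_of_partrec hp
  have hc' : ∀ a z : ℕ, c.eval (Nat.pair a z) = univ a 0 z := fun a z =>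
    (hc (a, z)).trans (map_encode_nat _)
  intro C
  filter_upwards [hX ((2 * g * (C + 1) + 1) * 2 + 3), eventually_ge_atTop (encode c + 2)]
    with n h hn a ha i hi
  obtain rfl : i = 0 := by simpa using hi
  obtain ⟨b, hb⟩ : ∃ b, b = Nat.size (n ^ C) := ⟨_, rfl⟩
  have hb1 : 1 ≤ b := hb ▸ Nat.size_pos.2 (Nat.pow_pos (by omega))
  obtain ⟨k, hk, hk2⟩ := exists_two_pow_between hb1
  have haw : a < 2 ^ 2 ^ k :=
    (ha.trans_lt (hb ▸ Nat.lt_size_self _)).trans_le (Nat.pow_le_pow_right (by norm_num) hk)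
  obtain ⟨u, hu, hu'⟩ := hconst k a haw
  have h2b : 2 ^ b ≤ n ^ (C + 1) := by
    have h1 : 2 ^ (b - 1) ≤ n ^ C := Nat.lt_size.1 (by omega)
    have e : 2 ^ b = 2 * 2 ^ (b - 1) := by rw [← pow_succ']; congr 1; omega
    rw [e, pow_succ, mul_comm]
    exact Nat.mul_le_mul h1 (by omega)
  have hV : 2 ^ (g * 2 ^ k) ≤ n ^ (2 * g * (C + 1) + 1) := by
    calc 2 ^ (g * 2 ^ k) ≤ 2 ^ (b * (2 * g)) :=
          Nat.pow_le_pow_right (by norm_num) (by nlinarith)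
      _ = (2 ^ b) ^ (2 * g) := by rw [pow_mul]
      _ ≤ (n ^ (C + 1)) ^ (2 * g) := Nat.pow_le_pow_left h2b _
      _ = n ^ ((C + 1) * (2 * g)) := (pow_mul _ _ _).symm
      _ ≤ _ := Nat.pow_le_pow_right (by omega) (by nlinarith)
  have hcV : encode c < n ^ (2 * g * (C + 1) + 1) :=
    (by omega : encode c < n).trans_le (Nat.le_self_pow (by omega) n)
  refine ⟨Code.comp c u, encode_comp_lt hcV (hu.trans_le hV) (le_trans ?_ h), fun z => ?_⟩
  · rw [pow_add n (_ * 2) 3, pow_mul n _ 2]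
    have h8 : 2 ^ 3 ≤ n ^ 3 := Nat.pow_le_pow_left (by omega) 3
    have h9 : 1 ≤ (n ^ (2 * g * (C + 1) + 1)) ^ 2 := Nat.one_le_pow _ _ (Nat.pow_pos (by omega))
    generalize (n ^ (2 * g * (C + 1) + 1)) ^ 2 = p at *
    generalize n ^ 3 = q at *
    nlinarith
  · rw [eval_comp_of (hu' z), hc']

lemma lt_two_pow_add {i p q : ℕ} (h : i < 2 ^ (p + q)) : i / 2 ^ p < 2 ^ q := by
  rw [pow_add] at h
  exact Nat.div_lt_of_lt_mul h

/-- Composing two codes doubles the amount of information carried. -/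
lemma Carry.double {X X' m : ℕ → ℕ} (H : Carry X m) (hX : ∀ᶠ n in atTop, 4 * X n ^ 2 + 3 ≤ X' n)
    (hm : PolyB m) : Carry X' fun n => 2 * m n := by
  have h2 : Computable fun p : ℕ × ℕ × ℕ => p.2 := Computable.snd
  have h1 : Partrec fun p : (ℕ × ℕ) × ℕ × ℕ × ℕ =>
      univ p.1.1 (p.2.1 * 2 ^ p.1.2 + p.2.2.1) p.2.2.2 := by
    refine partrec_univ_comp (Computable.fst.comp Computable.fst) ?_ ?_
    · exact (Primrec.nat_add.comp (Primrec.nat_mul.comp (Primrec.fst.comp Primrec.snd)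
        (primrec_two_pow.comp (Primrec.snd.comp Primrec.fst)))
        (Primrec.fst.comp (Primrec.snd.comp Primrec.snd))).to_comp
    · exact Computable.snd.comp (Computable.snd.comp Computable.snd)
  obtain ⟨M, hM⟩ := hm
  intro C
  filter_upwards [H.use h2.partrec 0, H.use h1 (2 * (C + M) + 2), hX, hM, eventually_ge_atTop 2]
    with n k2 k1 hX hM hn a ha i hi
  have hB : 0 < 2 ^ m n := by positivity
  obtain ⟨u, hu, hu'⟩ := k2 0 (by simp) (i % 2 ^ m n) (Nat.mod_lt _ hB)
  obtain ⟨v, hv, hv'⟩ := k1 (a, m n)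
    (pair_le_pow hn (ha.trans (Nat.pow_le_pow_right (by omega) (by omega)))
      (hM.trans (Nat.pow_le_pow_right (by omega) (by omega)))) (i / 2 ^ m n)
    (lt_two_pow_add (by rwa [← two_mul]))
  refine ⟨Code.comp v u, encode_comp_lt hv hu hX, fun z => ?_⟩
  have hz : u.eval z = Part.some (Nat.pair (i % 2 ^ m n) z) := (hu' z).trans (Part.map_some _ _)
  rw [eval_comp_of hz]
  refine (hv' (i % 2 ^ m n, z)).trans ((map_encode_nat _).trans ?_)
  simp only [Nat.div_add_mod']

/-! ### Strategies that identify the members of a distinguishable family -/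

lemma primrec_evaln_comp {α : Type} [Primcodable α] {f : α → ℕ} {g : α → Code} {h : α → ℕ}
    (hf : Primrec f) (hg : Primrec g) (hh : Primrec h) :
    Primrec fun a => Code.evaln (f a) (g a) (h a) :=
  Code.primrec_evaln.comp ((hf.pair hg).pair hh)

lemma primrecPred_forall_lt {α : Type} [Primcodable α] {R : ℕ → α → Prop} {f : α → ℕ}
    (hf : Primrec f) (hR : PrimrecRel R) : PrimrecPred fun a => ∀ i < f a, R i a := by
  have h1 := PrimrecRel.comp hR.forall_mem_list (Primrec.list_range.comp hf) Primrec.id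
  exact PrimrecPred.of_eq h1 fun a => by simp

lemma primrecPred_exists_lt {α : Type} [Primcodable α] {R : ℕ → α → Prop} {f : α → ℕ}
    (hf : Primrec f) (hR : PrimrecRel R) : PrimrecPred fun a => ∃ i < f a, R i a := by
  have h1 := PrimrecRel.comp hR.exists_mem_list (Primrec.list_range.comp hf) Primrec.id
  exact PrimrecPred.of_eq h1 fun a => by simp

/-- A strategy as finite data: a time bound, a number of rounds, an initial state, a transition
table, a table decoding final states, and a list of (indices of) codes to be identified. The query
asked in state `s` is `s.unpair.1`. -/
abbrev Strat : Type := ℕ × ℕ × ℕ × List ℕ × List ℕ × List ℕ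

namespace Strat

/-- The time allowed for each query. -/
def time (w : Strat) : ℕ := w.1
/-- The number of rounds, minus one. -/
def rounds (w : Strat) : ℕ := w.2.1
/-- The initial state. -/
def init (w : Strat) : ℕ := w.2.2.1
/-- The state that follows `s` once its query has been answered by `v`. -/
def next (w : Strat) (s v : ℕ) : ℕ := w.2.2.2.1.getD (Nat.pair s v) 0
/-- The position of the code identified by a final state. -/
def dec (w : Strat) (s : ℕ) : ℕ := w.2.2.2.2.1.getD s 0
/-- The index of the `i`-th code to be identified. -/
def idx (w : Strat) (i : ℕ) : ℕ := w.2.2.2.2.2.getD i 0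

/-- The state reached after `t` rounds against `c`. -/
def run (w : Strat) (c : Code) (t : ℕ) : Option ℕ :=
  t.rec (some w.init) fun _ r => r.bind fun s =>
    (Code.evaln w.time c s.unpair.1).map fun v => w.next s v

/-- The strategy identifies `2 ^ ℓ` codes below `X`. -/
def Good (X ℓ : ℕ) (w : Strat) : Prop :=
  ∀ i < 2 ^ ℓ, w.idx i < X ∧
    (w.run (ofNat Code (w.idx i)) (w.rounds + 1)).map w.dec = some i

lemma run_zero (w : Strat) (c : Code) : w.run c 0 = some w.init := rfl

lemma run_succ (w : Strat) (c : Code) (t : ℕ) : w.run c (t + 1) = (w.run c t).bind fun s =>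
    (Code.evaln w.time c s.unpair.1).map fun v => w.next s v := rfl

section Comp

variable {α : Type} [Primcodable α]

lemma primrec_next {f : α → Strat} {g h : α → ℕ} (hf : Primrec f) (hg : Primrec g)
    (hh : Primrec h) : Primrec fun a => (f a).next (g a) (h a) :=
  (Primrec.list_getD 0).comp
    (Primrec.fst.comp (Primrec.snd.comp (Primrec.snd.comp (Primrec.snd.comp hf))))
    (Primrec₂.natPair.comp hg hh)

lemma primrec_dec {f : α → Strat} {g : α → ℕ} (hf : Primrec f) (hg : Primrec g) :
    Primrec fun a => (f a).dec (g a) :=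
  (Primrec.list_getD 0).comp
    (Primrec.fst.comp (Primrec.snd.comp (Primrec.snd.comp
      (Primrec.snd.comp (Primrec.snd.comp hf))))) hg

lemma primrec_idx {f : α → Strat} {g : α → ℕ} (hf : Primrec f) (hg : Primrec g) :
    Primrec fun a => (f a).idx (g a) :=
  (Primrec.list_getD 0).comp
    (Primrec.snd.comp (Primrec.snd.comp (Primrec.snd.comp
      (Primrec.snd.comp (Primrec.snd.comp hf))))) hg

end Comp

lemma primrec_time : Primrec Strat.time := Primrec.fst

lemma primrec_rounds : Primrec Strat.rounds := Primrec.fst.comp Primrec.snd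

lemma primrec_init : Primrec Strat.init := Primrec.fst.comp (Primrec.snd.comp Primrec.snd)

lemma primrec_run : Primrec fun p : Strat × Code × ℕ => p.1.run p.2.1 p.2.2 := by
  have h1 : Primrec fun r : ((Strat × Code × ℕ) × ℕ × Option ℕ) × ℕ => r.1.1.1 :=
    Primrec.fst.comp (Primrec.fst.comp Primrec.fst)
  have h2 : Primrec fun r : ((Strat × Code × ℕ) × ℕ × Option ℕ) × ℕ => r.1.1.2.1 :=
    Primrec.fst.comp (Primrec.snd.comp (Primrec.fst.comp Primrec.fst))
  have h3 : Primrec fun r : ((Strat × Code × ℕ) × ℕ × Option ℕ) × ℕ => r.2.unpair.1 :=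
    Primrec.fst.comp (Primrec.unpair.comp Primrec.snd)
  have h4 := primrec_evaln_comp (primrec_time.comp h1) h2 h3
  have h51 : Primrec fun p : (((Strat × Code × ℕ) × ℕ × Option ℕ) × ℕ) × ℕ => p.1.1.1.1 :=
    h1.comp Primrec.fst
  have h52 : Primrec fun p : (((Strat × Code × ℕ) × ℕ × Option ℕ) × ℕ) × ℕ => p.1.2 :=
    Primrec.snd.comp Primrec.fst
  have h5 := primrec_next h51 h52 Primrec.snd
  have h6 := Primrec.option_map h4 h5.to₂
  have hstep : Primrec₂ fun (p : Strat × Code × ℕ) (q : ℕ × Option ℕ) =>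
      q.2.bind fun s => (Code.evaln p.1.time p.2.1 s.unpair.1).map fun v => p.1.next s v := by
    have h7 : Primrec fun r : (Strat × Code × ℕ) × ℕ × Option ℕ => r.2.2 :=
      Primrec.snd.comp Primrec.snd
    have h8 := Primrec.option_bind h7 h6.to₂
    exact h8.to₂
  have h9 : Primrec fun p : Strat × Code × ℕ => p.2.2 := Primrec.snd.comp Primrec.snd
  have h10 : Primrec fun p : Strat × Code × ℕ => some p.1.init :=
    Primrec.option_some.comp (primrec_init.comp Primrec.fst)
  have h11 := Primrec.nat_rec' h9 h10 hstep
  exact h11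

attribute [irreducible] run

lemma primrec_run_comp {α : Type} [Primcodable α] {f : α → Strat} {g : α → Code} {h : α → ℕ}
    (hf : Primrec f) (hg : Primrec g) (hh : Primrec h) :
    Primrec fun a => (f a).run (g a) (h a) :=
  primrec_run.comp (hf.pair (hg.pair hh))

lemma primrecPred_good :
    PrimrecPred fun p : (ℕ × ℕ) × Strat => Good p.1.1 p.1.2 p.2 := by
  have hw : Primrec fun q : ℕ × (ℕ × ℕ) × Strat => q.2.2 := Primrec.snd.comp Primrec.snd
  have hidx : Primrec fun q : ℕ × (ℕ × ℕ) × Strat => q.2.2.idx q.1 :=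
    primrec_idx hw Primrec.fst
  have h1 : PrimrecPred fun q : ℕ × (ℕ × ℕ) × Strat => q.2.2.idx q.1 < q.2.1.1 :=
    Primrec.nat_lt.comp hidx (Primrec.fst.comp (Primrec.fst.comp Primrec.snd))
  have hcode : Primrec fun q : ℕ × (ℕ × ℕ) × Strat => ofNat Code (q.2.2.idx q.1) :=
    (Primrec.ofNat Code).comp hidx
  have hrun : Primrec fun q : ℕ × (ℕ × ℕ) × Strat =>
      q.2.2.run (ofNat Code (q.2.2.idx q.1)) (q.2.2.rounds + 1) :=
    primrec_run_comp hw hcode (Primrec.succ.comp (primrec_rounds.comp hw))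
  have hw' : Primrec fun p : (ℕ × (ℕ × ℕ) × Strat) × ℕ => p.1.2.2 := hw.comp Primrec.fst
  have hdec := primrec_dec hw' Primrec.snd
  have h2 : PrimrecPred fun q : ℕ × (ℕ × ℕ) × Strat =>
      (q.2.2.run (ofNat Code (q.2.2.idx q.1)) (q.2.2.rounds + 1)).map q.2.2.dec = some q.1 := by
    have h20 := Primrec.option_map hrun hdec.to₂
    have h21 : Primrec fun q : ℕ × (ℕ × ℕ) × Strat => some q.1 :=
      Primrec.option_some.comp Primrec.fst
    have h22 := Primrec.eq.comp h20 h21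
    exact h22
  have h3 : PrimrecRel fun (i : ℕ) (p : (ℕ × ℕ) × Strat) => p.2.idx i < p.1.1 ∧
      (p.2.run (ofNat Code (p.2.idx i)) (p.2.rounds + 1)).map p.2.dec = some i := h1.and h2
  have h4 : Primrec fun p : (ℕ × ℕ) × Strat => p.1.2 := Primrec.snd.comp Primrec.fst
  exact primrecPred_forall_lt (primrec_two_pow_comp h4) h3

end Strat

lemma exists_bound {α : Type} (S : Finset α) (n : ℕ) (f : α → ℕ → ℕ) :
    ∃ B, ∀ a ∈ S, ∀ t < n, f a t < B := by
  refine ⟨∑ a ∈ S, ∑ t ∈ Finset.range n, f a t + 1, fun a ha t ht => Nat.lt_succ_of_le ?_⟩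
  exact (Finset.single_le_sum (f := fun t => f a t) (fun _ _ => Nat.zero_le _)
    (Finset.mem_range.2 ht)).trans
    (Finset.single_le_sum (f := fun a => ∑ t ∈ Finset.range n, f a t)
      (fun _ _ => Nat.zero_le _) ha)

lemma getD_table {B j : ℕ} (f : ℕ → ℕ) (h : j < B) : ((List.range B).map f).getD j 0 = f j := by
  simp [List.getD_eq_getElem?_getD, h]

/-- The value of a code, and `0` where it is undefined. -/
noncomputable def val (c : Code) (y : ℕ) : ℕ :=
  open Classical in if h : (c.eval y).Dom then (c.eval y).get h else 0

lemma eval_eq_val {c : Code} {y : ℕ} (h : (c.eval y).Dom) : c.eval y = Part.some (val c y) := by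
  rw [val, dif_pos h]; simp

/-- A sequentially distinguishable set is identified by a strategy whose states are the sets of
codes consistent with the answers so far. -/
lemma SD.exists_strat {S : Finset Code} {X ℓ : ℕ} (hS : SD S) (hℓ : 1 ≤ ℓ)
    (hcard : S.card = 2 ^ ℓ) (hX : ∀ c ∈ S, encode c < X) : ∃ w : Strat, w.Good X ℓ := by
  classical
  have hS2 : 2 ≤ S.card := by
    rw [hcard]; exact Nat.pow_le_pow_right (n := 2) (by norm_num) hℓ
  have hsplit : ∀ T : Finset Code, T ⊆ S → 2 ≤ T.card → ∃ y, (∀ c ∈ T, (c.eval y).Dom) ∧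
      ∃ p ∈ T, ∃ q ∈ T, val p y ≠ val q y := by
    intro T hT h2
    have := hS T hT h2
    simp only [Agree, id, not_forall] at this
    obtain ⟨y, hd, p, hp, q, hq, hne⟩ := this
    refine ⟨y, hd, p, hp, q, hq, fun he => hne ?_⟩
    rw [eval_eq_val (hd p hp), eval_eq_val (hd q hq), he]
  choose! q₀ hq₀ hq₁ using hsplit
  set q : Finset Code → ℕ := fun T => if 2 ≤ T.card then q₀ T else q₀ S with hq
  have hqd : ∀ T ⊆ S, ∀ c ∈ T, (c.eval (q T)).Dom := by
    intro T hT c hc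
    simp only [hq]
    split_ifs with h
    · exact hq₀ T hT h c hc
    · exact hq₀ S subset_rfl hS2 c (hT hc)
  set st : Finset Code → ℕ := fun T => Nat.pair (q T) (encode T) with hst
  set nx : Finset Code → ℕ → Finset Code := fun T v => T.filter fun c => val c (q T) = v with hnx
  set sq : Code → ℕ → Finset Code := fun c t =>
    t.rec S fun _ T => nx T (val c (q T)) with hsq
  have hsq0 : ∀ c, sq c 0 = S := fun c => rfl
  have hsq1 : ∀ c t, sq c (t + 1) = nx (sq c t) (val c (q (sq c t))) := fun c t => rfl
  have hsub : ∀ c t, sq c t ⊆ S := by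
    intro c t
    induction t with
    | zero => exact subset_rfl
    | succ t ih => exact (Finset.filter_subset _ _).trans ih
  have hmem : ∀ c ∈ S, ∀ t, c ∈ sq c t := by
    intro c hc t
    induction t with
    | zero => exact hc
    | succ t ih => exact Finset.mem_filter.2 ⟨ih, rfl⟩
  have hdec : ∀ c ∈ S, ∀ t, 2 ≤ (sq c t).card → (sq c (t + 1)).card < (sq c t).card := by
    intro c hc t h2
    refine Finset.card_lt_card ((Finset.filter_subset _ _).ssubset_of_ne fun he => ?_)
    obtain ⟨p, hp, p', hp', hne⟩ := hq₁ _ (hsub c t) h2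
    have hqe : q (sq c t) = q₀ (sq c t) := by simp only [hq]; rw [if_pos h2]
    have h1 := Finset.filter_eq_self.1 he p hp
    have h3 := Finset.filter_eq_self.1 he p' hp'
    rw [hqe] at h1 h3
    exact hne (h1.trans h3.symm)
  have hcle : ∀ c ∈ S, ∀ t, (sq c t).card ≤ max 1 (S.card - t) := by
    intro c hc t
    induction t with
    | zero => simp [hsq0]
    | succ t ih =>
      have hle : (sq c (t + 1)).card ≤ (sq c t).card :=
        Finset.card_le_card (Finset.filter_subset _ _)
      rcases lt_or_ge (sq c t).card 2 with h | h
      · exact (by omega : (sq c (t + 1)).card ≤ 1).trans (le_max_left _ _)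
      · have := hdec c hc t h
        rcases le_max_iff.1 ih with h1 | h1
        · omega
        · exact le_max_of_le_right (by omega)
  obtain ⟨N, hN⟩ : ∃ N, S.card = N + 1 := ⟨S.card - 1, by omega⟩
  have hfin : ∀ c ∈ S, sq c (N + 1) = {c} := by
    intro c hc
    have h1 := hcle c hc (N + 1)
    rw [hN] at h1
    simp only [Nat.sub_self, zero_le, sup_of_le_left] at h1
    exact Finset.eq_singleton_iff_unique_mem.2 ⟨hmem c hc (N + 1), fun d hd =>
      Finset.card_le_one.1 h1 d hd c (hmem c hc (N + 1))⟩
  -- The transition function on states, and the tables and time bound covering all runs.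
  set nxt : ℕ → ℕ → ℕ := fun s v => st (nx ((decode s.unpair.2).getD ∅) v) with hnxt
  have hnxt' : ∀ T v, nxt (st T) v = st (nx T v) := by
    intro T v; simp [hnxt, hst, encodek]
  have hstinj : Function.Injective st := fun T T' h => encode_injective (Nat.pair_eq_pair.1 h).2
  have hlist : S.toList.length = 2 ^ ℓ := by rw [Finset.length_toList, hcard]
  set cd : ℕ → Code := fun i => S.toList.getD i Code.zero with hcd
  have hcdS : ∀ i < 2 ^ ℓ, cd i ∈ S := by
    intro i hi
    have : i < S.toList.length := by rw [hlist]; exact hi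
    simp only [hcd, List.getD_eq_getElem _ _ this]
    exact Finset.mem_toList.1 (List.getElem_mem _)
  have hcdinj : Set.InjOn (fun i => st {cd i}) (Set.Iio (2 ^ ℓ)) := by
    intro i hi j hj h
    have h1 : cd i = cd j := Finset.singleton_injective (hstinj h)
    have hi' : i < S.toList.length := by rw [hlist]; exact hi
    have hj' : j < S.toList.length := by rw [hlist]; exact hj
    simp only [hcd, List.getD_eq_getElem _ _ hi', List.getD_eq_getElem _ _ hj'] at h1
    exact (List.Nodup.getElem_inj_iff S.nodup_toList).1 h1
  set dc : ℕ → ℕ := Function.invFunOn (fun i => st {cd i}) (Set.Iio (2 ^ ℓ)) with hdc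
  have hdc' : ∀ i < 2 ^ ℓ, dc (st {cd i}) = i := fun i hi => hcdinj.leftInvOn_invFunOn hi
  obtain ⟨B, hB⟩ := exists_bound S (N + 1) fun c t =>
    Nat.pair (st (sq c t)) (val c (q (sq c t)))
  obtain ⟨B', hB'⟩ := exists_bound S (N + 2) fun c t => st (sq c t)
  have htime : ∀ c ∈ S, ∀ t, ∃ k, val c (q (sq c t)) ∈ Code.evaln k c (q (sq c t)) := by
    intro c hc t
    apply Code.evaln_complete.1
    rw [eval_eq_val (hqd _ (hsub c t) c (hmem c hc t))]
    exact Part.mem_some _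
  choose! κ hκ using htime
  obtain ⟨τ, hτ⟩ := exists_bound S (N + 1) κ
  set w : Strat := (τ, N, st S, (List.range B).map (fun j => nxt j.unpair.1 j.unpair.2),
    (List.range B').map dc, S.toList.map encode) with hw
  have hrun : ∀ c ∈ S, ∀ t ≤ N + 1, w.run c t = some (st (sq c t)) := by
    intro c hc t ht
    induction t with
    | zero => exact w.run_zero c
    | succ t ih =>
      have e : w.run c (t + 1) = (w.run c t).bind fun s =>
        (Code.evaln w.time c s.unpair.1).map fun v => w.next s v := w.run_succ c t
      rw [e, ih (by omega)]
      have h1 : Code.evaln w.time c (q (sq c t)) = some (val c (q (sq c t))) :=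
        Code.evaln_mono (hτ c hc t (by omega)).le (hκ c hc t)
      have h2 : (st (sq c t)).unpair.1 = q (sq c t) := by simp [hst]
      rw [Option.bind_some, h2, h1, Option.map_some, hsq1]
      congr 1
      have h3 := getD_table (fun j => nxt j.unpair.1 j.unpair.2) (hB c hc t (by omega))
      refine h3.trans ?_
      rw [Nat.unpair_pair]
      exact hnxt' _ _
  refine ⟨w, fun i hi => ?_⟩
  have hidx : w.idx i = encode (cd i) := by
    have hi' : i < S.toList.length := by rw [hlist]; exact hi
    have hi'' : i < (S.toList.map encode).length := by simpa using hi'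
    change (S.toList.map encode).getD i 0 = _
    simp only [hcd, List.getD_eq_getElem _ _ hi', List.getD_eq_getElem _ _ hi'', List.getElem_map]
  rw [hidx]
  refine ⟨hX _ (hcdS i hi), ?_⟩
  rw [ofNat_encode]
  have hr := hrun _ (hcdS i hi) (N + 1) le_rfl
  change (w.run (cd i) (N + 1)).map w.dec = some i
  rw [hr, Option.map_some]
  congr 1
  refine (getD_table dc (hB' _ (hcdS i hi) (N + 1) (by omega))).trans ?_
  rw [hfin _ (hcdS i hi)]
  exact hdc' i hi

lemma exists_strat_of_le_tau {X ℓ : ℕ} (hℓ : 1 ≤ ℓ) (h : 2 ^ ℓ ≤ tau X) :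
    ∃ w : Strat, w.Good X ℓ := by
  obtain ⟨S, hS, hSD, hc⟩ := exists_sdNum (codesBelow X)
  obtain ⟨S', hS', hc'⟩ := Finset.exists_subset_card_eq (h.trans hc.ge)
  exact (hSD.mono hS').exists_strat hℓ hc' fun c hcS => mem_codesBelow.1 (hS (hS' hcS))

/-! ### Extracting the information content of a distinguishable code -/

lemma Strat.run_spec {w : Strat} {c : Code} {u : ℕ} : ∀ {T : ℕ}, w.run c T = some u →
    ∃ s v : ℕ → ℕ, s 0 = w.init ∧ s T = u ∧
      ∀ t < T, c.eval (s t).unpair.1 = Part.some (v t) ∧ s (t + 1) = w.next (s t) (v t) := by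
  intro T h
  have hsome : ∀ t ≤ T, ∃ x, w.run c t = some x := by
    intro t ht
    induction ht using Nat.decreasingInduction with
    | self => exact ⟨u, h⟩
    | of_succ k _ ih =>
      obtain ⟨x, hx⟩ := ih
      rw [w.run_succ] at hx
      obtain ⟨y, hy, -⟩ := Option.bind_eq_some_iff.1 hx
      exact ⟨y, hy⟩
  refine ⟨fun t => (w.run c t).getD 0, fun t =>
    (Code.evaln w.time c ((w.run c t).getD 0).unpair.1).getD 0, ?_, ?_, fun t ht => ?_⟩
  · simp [w.run_zero]
  · simp [h]
  · obtain ⟨x, hx⟩ := hsome t ht.le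
    obtain ⟨y, hy⟩ := hsome (t + 1) ht
    have hy' := hy
    rw [w.run_succ, hx, Option.bind_some, Option.map_eq_some_iff] at hy'
    obtain ⟨v, hv, hvy⟩ := hy'
    simp only [hx, hy, Option.getD_some, hv]
    exact ⟨Part.eq_some_iff.2 (Code.evaln_sound hv), hvy.symm⟩

/-- Unbounded search for a witness of a primitive recursive property. -/
lemma exists_partrec_search {α W : Type} [Primcodable α] [Primcodable W] {R : α → W → Prop}
    (hR : PrimrecPred fun q : α × W => R q.1 q.2) :
    ∃ σ : α →. W, Partrec σ ∧ ∀ a, (∃ w, R a w) → ∃ w, R a w ∧ σ a = Part.some w := by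
  classical
  have h1 : PrimrecPred fun q : (α × ℕ) × W => R q.1.1 q.2 :=
    PrimrecPred.comp hR ((Primrec.fst.comp Primrec.fst).pair Primrec.snd)
  have h2 : Primrec fun q : (α × ℕ) × W => if R q.1.1 q.2 then some q.2 else none :=
    Primrec.ite h1 (Primrec.option_some.comp Primrec.snd) (Primrec.const none)
  have h3 : Primrec fun p : α × ℕ => (decode p.2 : Option W) :=
    Primrec.decode.comp Primrec.snd
  have h4 := Primrec.option_bind h3 h2.to₂
  have h5 := Partrec.rfindOpt h4.to_comp.to₂
  refine ⟨_, h5, fun a ⟨w, hw⟩ => ?_⟩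
  set F : ℕ → Option W := fun k => (decode k : Option W).bind fun w =>
    if R a w then some w else none with hF
  have hd : (Nat.rfindOpt F).Dom := Nat.rfindOpt_dom.2 ⟨encode w, w, by simp [hF, encodek, hw]⟩
  have hmem := Part.get_mem hd
  obtain ⟨k, hk⟩ := Nat.rfindOpt_spec hmem
  simp only [hF, Option.mem_def, Option.bind_eq_some_iff] at hk
  obtain ⟨w', -, hk⟩ := hk
  split_ifs at hk with hg
  refine ⟨w', hg, ?_⟩
  rw [Option.some.inj hk]
  exact Part.eq_some_iff.2 hmem

lemma exists_partrec_strat {ξ : ℕ → ℕ} (hξ : Primrec ξ) :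
    ∃ σ : ℕ × ℕ →. Strat, Partrec σ ∧ ∀ b ℓ, (∃ w : Strat, w.Good (ξ b) ℓ) →
      ∃ w : Strat, w.Good (ξ b) ℓ ∧ σ (b, ℓ) = Part.some w := by
  have h1 : PrimrecPred fun q : (ℕ × ℕ) × Strat => Strat.Good (ξ q.1.1) q.1.2 q.2 := by
    have ha : Primrec fun q : (ℕ × ℕ) × Strat => ξ q.1.1 :=
      hξ.comp (Primrec.fst.comp Primrec.fst)
    have hb : Primrec fun q : (ℕ × ℕ) × Strat => q.1.2 := Primrec.snd.comp Primrec.fst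
    have hc := PrimrecPred.comp Strat.primrecPred_good ((ha.pair hb).pair Primrec.snd)
    exact hc
  obtain ⟨σ, hσ, h⟩ :=
    exists_partrec_search (R := fun (p : ℕ × ℕ) (w : Strat) => Strat.Good (ξ p.1) p.2 w) h1
  exact ⟨σ, hσ, fun b ℓ => h (b, ℓ)⟩

section Comp

variable {α : Type} [Primcodable α]

lemma cu1 {f : α → ℕ} (hf : Primrec f) : Primrec fun a => (f a).unpair.1 :=
  Primrec.fst.comp (Primrec.unpair.comp hf)

lemma cu2 {f : α → ℕ} (hf : Primrec f) : Primrec fun a => (f a).unpair.2 :=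
  Primrec.snd.comp (Primrec.unpair.comp hf)

lemma cpair {f g : α → ℕ} (hf : Primrec f) (hg : Primrec g) :
    Primrec fun a => Nat.pair (f a) (g a) := Primrec₂.natPair.comp hf hg

lemma cpred {f : α → ℕ} (hf : Primrec f) : Primrec fun a => f a - 1 :=
  Primrec.nat_sub.comp hf (Primrec.const 1)

lemma cif0 {β : Type} [Primcodable β] {f : α → ℕ} {g h : α → β} (hf : Primrec f) (hg : Primrec g)
    (hh : Primrec h) : Primrec fun a => if f a = 0 then g a else h a :=
  Primrec.ite (Primrec.eq.comp hf (Primrec.const 0)) hg hh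

/-- Positional combination of a low part `i < 2 ^ p` with a high part `j`. -/
def glue (p i j : ℕ) : ℕ := i + 2 ^ p * j

lemma cglue {p f g : α → ℕ} (hp : Primrec p) (hf : Primrec f) (hg : Primrec g) :
    Primrec fun a => glue (p a) (f a) (g a) :=
  Primrec.nat_add.comp hf (Primrec.nat_mul.comp (primrec_two_pow_comp hp) hg)

end Comp

lemma glue_mod_div (p i : ℕ) : glue p (i % 2 ^ p) (i / 2 ^ p) = i := Nat.mod_add_div _ _

/-- Output of the state-passing code: it remembers the answer `r` of the family member, the
counter, and the information `i` of its own. -/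
def outFn (i : ℕ) (x : ℕ × ℕ × ℕ) : ℕ × ℕ × ℕ :=
  (if x.2.1 = 0 then x.2.2 else x.2.2.unpair.1, x.2.1 + 1, i)

/-- The next query, followed by a counter value that encodes the new state of the strategy and the
collected information. -/
def askFn (w : Strat) (i : ℕ) (x : ℕ × ℕ × ℕ × ℕ × ℕ) : ℕ × ℕ :=
  let s := if x.2.2.2.1 = 0 then w.init else w.next (x.2.2.2.1 - 1).unpair.1 x.2.2.1
  let W := if x.2.2.2.1 = 0 then Nat.pair i (Nat.pair x.2.2.2.2 x.1)
    else (x.2.2.2.1 - 1).unpair.2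
  (s.unpair.1, Nat.pair s W + 1)

/-- The information recovered at the end, where `ℓ` and `m` are the numbers of bits of the parts. -/
def infoFn (w : Strat) (ℓ m i : ℕ) (x : ℕ × ℕ × ℕ) : ℕ :=
  let q := (x.2.1 - 1).unpair
  glue ℓ (w.dec (w.next q.1 x.1)) (glue m x.2.2 (glue (2 * m) q.2.unpair.1
    (glue (4 * m) q.2.unpair.2.unpair.1 (glue (8 * m) q.2.unpair.2.unpair.2.unpair.1 i))))

/-- The original input recovered at the end. -/
def inputFn (x : ℕ × ℕ × ℕ) : ℕ := (x.2.1 - 1).unpair.2.unpair.2.unpair.2.unpair.2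

lemma primrec_outFn : Primrec fun p : ℕ × ℕ × ℕ × ℕ × ℕ => outFn p.2.1 p.2.2 := by
  have hi : Primrec fun p : ℕ × ℕ × ℕ × ℕ × ℕ => p.2.1 := Primrec.fst.comp Primrec.snd
  have hx : Primrec fun p : ℕ × ℕ × ℕ × ℕ × ℕ => p.2.2.2 :=
    Primrec.snd.comp (Primrec.snd.comp Primrec.snd)
  have hk : Primrec fun p : ℕ × ℕ × ℕ × ℕ × ℕ => p.2.2.2.1 := Primrec.fst.comp hx
  have hr : Primrec fun p : ℕ × ℕ × ℕ × ℕ × ℕ => p.2.2.2.2 := Primrec.snd.comp hx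
  have h := (cif0 hk hr (cu1 hr)).pair ((Primrec.succ.comp hk).pair hi)
  exact h

/-- The type of advice: target, size parameter, and the two numbers of bits. -/
abbrev Adv : Type := ℕ × ℕ × ℕ × ℕ

lemma primrec_askFn :
    Primrec fun p : (Adv × ℕ × ℕ × ℕ × ℕ × ℕ × ℕ) × Strat => askFn p.2 p.1.2.1 p.1.2.2 := by
  have hw : Primrec fun p : (Adv × ℕ × ℕ × ℕ × ℕ × ℕ × ℕ) × Strat => p.2 := Primrec.snd
  have h0 : Primrec fun p : (Adv × ℕ × ℕ × ℕ × ℕ × ℕ × ℕ) × Strat => p.1.2 :=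
    Primrec.snd.comp Primrec.fst
  have hi : Primrec fun p : (Adv × ℕ × ℕ × ℕ × ℕ × ℕ × ℕ) × Strat => p.1.2.1 :=
    Primrec.fst.comp h0
  have h1 : Primrec fun p : (Adv × ℕ × ℕ × ℕ × ℕ × ℕ × ℕ) × Strat => p.1.2.2 :=
    Primrec.snd.comp h0
  have hA : Primrec fun p : (Adv × ℕ × ℕ × ℕ × ℕ × ℕ × ℕ) × Strat => p.1.2.2.1 :=
    Primrec.fst.comp h1
  have h2 : Primrec fun p : (Adv × ℕ × ℕ × ℕ × ℕ × ℕ × ℕ) × Strat => p.1.2.2.2.2 :=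
    Primrec.snd.comp (Primrec.snd.comp h1)
  have ha : Primrec fun p : (Adv × ℕ × ℕ × ℕ × ℕ × ℕ × ℕ) × Strat => p.1.2.2.2.2.1 :=
    Primrec.fst.comp h2
  have hp : Primrec fun p : (Adv × ℕ × ℕ × ℕ × ℕ × ℕ × ℕ) × Strat => p.1.2.2.2.2.2.1 :=
    Primrec.fst.comp (Primrec.snd.comp h2)
  have hj : Primrec fun p : (Adv × ℕ × ℕ × ℕ × ℕ × ℕ × ℕ) × Strat => p.1.2.2.2.2.2.2 :=
    Primrec.snd.comp (Primrec.snd.comp h2)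
  have hs := cif0 hp (Strat.primrec_init.comp hw) (Strat.primrec_next hw (cu1 (cpred hp)) ha)
  have hW := cif0 hp (cpair hi (cpair hj hA)) (cu2 (cpred hp))
  have h := (cu1 hs).pair (Primrec.succ.comp (cpair hs hW))
  exact h

lemma primrec_infoFn : Primrec fun p : (Adv × ℕ × ℕ × ℕ × ℕ) × Strat =>
    infoFn p.2 p.1.1.2.2.1 p.1.1.2.2.2 p.1.2.1 p.1.2.2 := by
  have hw : Primrec fun p : (Adv × ℕ × ℕ × ℕ × ℕ) × Strat => p.2 := Primrec.snd
  have hα : Primrec fun p : (Adv × ℕ × ℕ × ℕ × ℕ) × Strat => p.1.1.2.2 :=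
    Primrec.snd.comp (Primrec.snd.comp (Primrec.fst.comp Primrec.fst))
  have hℓ : Primrec fun p : (Adv × ℕ × ℕ × ℕ × ℕ) × Strat => p.1.1.2.2.1 := Primrec.fst.comp hα
  have hm : Primrec fun p : (Adv × ℕ × ℕ × ℕ × ℕ) × Strat => p.1.1.2.2.2 := Primrec.snd.comp hα
  have h0 : Primrec fun p : (Adv × ℕ × ℕ × ℕ × ℕ) × Strat => p.1.2 :=
    Primrec.snd.comp Primrec.fst
  have hi : Primrec fun p : (Adv × ℕ × ℕ × ℕ × ℕ) × Strat => p.1.2.1 := Primrec.fst.comp h0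
  have h1 : Primrec fun p : (Adv × ℕ × ℕ × ℕ × ℕ) × Strat => p.1.2.2 := Primrec.snd.comp h0
  have ha : Primrec fun p : (Adv × ℕ × ℕ × ℕ × ℕ) × Strat => p.1.2.2.1 := Primrec.fst.comp h1
  have hp : Primrec fun p : (Adv × ℕ × ℕ × ℕ × ℕ) × Strat => p.1.2.2.2.1 :=
    Primrec.fst.comp (Primrec.snd.comp h1)
  have hj : Primrec fun p : (Adv × ℕ × ℕ × ℕ × ℕ) × Strat => p.1.2.2.2.2 :=
    Primrec.snd.comp (Primrec.snd.comp h1)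
  have hq1 := cu1 (cpred hp)
  have hq2 := cu2 (cpred hp)
  have hc (c : ℕ) : Primrec fun p : (Adv × ℕ × ℕ × ℕ × ℕ) × Strat => c * p.1.1.2.2.2 :=
    Primrec.nat_mul.comp (Primrec.const c) hm
  have h := cglue hℓ (Strat.primrec_dec hw (Strat.primrec_next hw hq1 ha)) (cglue hm hj
    (cglue (hc 2) (cu1 hq2) (cglue (hc 4) (cu1 (cu2 hq2)) (cglue (hc 8) (cu1 (cu2 (cu2 hq2))) hi))))
  exact h

lemma primrec_inputFn : Primrec inputFn := by
  have hp : Primrec fun x : ℕ × ℕ × ℕ => x.2.1 := Primrec.fst.comp Primrec.snd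
  have h := cu2 (cu2 (cu2 (cu2 (cpred hp))))
  exact h

/-! ### The code that runs a strategy -/

lemma eval_prec_succ_of {a b : Code} {y p r : ℕ}
    (h : (Code.prec a b).eval (Nat.pair y p) = Part.some r) :
    (Code.prec a b).eval (Nat.pair y (p + 1)) = b.eval (Nat.pair y (Nat.pair p r)) := by
  rw [Code.eval_prec_succ, h]
  simp

lemma encode_two (a b : ℕ) : encode (a, b) = Nat.pair a b := rfl

lemma encode_three (a b c : ℕ) : encode (a, b, c) = Nat.pair a (Nat.pair b c) := rfl

lemma encode_five (a b c d e : ℕ) :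
    encode (a, b, c, d, e) = Nat.pair a (Nat.pair b (Nat.pair c (Nat.pair d e))) := rfl

/-- The code built from five information carriers and a member `Q` of a distinguishable family:
it runs the strategy against `Q` inside a primitive recursion and collects all the information. -/
def runner (Q h0 h1 C2 h3 h4 : Code) : Code :=
  Code.comp h4 (Code.comp (Code.prec C2 (Code.comp (Code.prec Q h0) h1)) h3)

lemma runner_eval {w : Strat} {Q h0 h1 C2 h3 h4 : Code} {ℓ m iQ i0 i1 i2 i3 i4 z : ℕ}
    {F : ℕ × ℕ × ℕ → Part ℕ}
    (hrun : (w.run Q (w.rounds + 1)).map w.dec = some iQ)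
    (e0 : ∀ x, h0.eval (encode x) = Part.some (encode (outFn i0 x)))
    (e1 : ∀ x, h1.eval (encode x) = Part.some (encode (askFn w i1 x)))
    (e2 : ∀ y, C2.eval y = Part.some (Nat.pair 0 (Nat.pair 0 i2)))
    (e3 : h3.eval z = Part.some (Nat.pair (Nat.pair i3 z) (w.rounds + 1)))
    (e4 : ∀ x, h4.eval (encode x) = F x) :
    ∃ x, infoFn w ℓ m i4 x = glue ℓ iQ (glue m i0 (glue (2 * m) i1 (glue (4 * m) i2
      (glue (8 * m) i3 i4)))) ∧ inputFn x = z ∧ (runner Q h0 h1 C2 h3 h4).eval z = F x := by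
  obtain ⟨u, hu, hdec⟩ := Option.map_eq_some_iff.1 hrun
  obtain ⟨s, v, hs0, hsT, hstep⟩ := Strat.run_spec hu
  have hG : ∀ y r p, Q.eval y = Part.some r → (Code.prec Q h0).eval (Nat.pair y (p + 1)) =
      Part.some (Nat.pair r (Nat.pair (p + 1) i0)) := by
    intro y r p hr
    induction p with
    | zero =>
      have h : (Code.prec Q h0).eval (Nat.pair y 0) = Part.some r := by
        rw [Code.eval_prec_zero, hr]
      rw [eval_prec_succ_of h, ← encode_three, e0, outFn, if_pos rfl, encode_three]
    | succ p ih =>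
      rw [eval_prec_succ_of ih, ← encode_three, e0, outFn, if_neg (Nat.succ_ne_zero p),
        encode_three, Nat.unpair_pair]
  obtain ⟨A, hA⟩ : ∃ A, A = Nat.pair i3 z := ⟨_, rfl⟩
  obtain ⟨W, hW⟩ : ∃ W, W = Nat.pair i1 (Nat.pair i2 A) := ⟨_, rfl⟩
  have hD : ∀ k r, (Code.comp (Code.prec Q h0) h1).eval (Nat.pair A (Nat.pair k r)) =
      (Code.prec Q h0).eval (encode (askFn w i1 (A, k, r.unpair.1, r.unpair.2.unpair.1, r.unpair.2.unpair.2))) := by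
    intro k r
    refine eval_comp_of ?_
    have he : encode (A, k, r.unpair.1, r.unpair.2.unpair.1, r.unpair.2.unpair.2) =
        Nat.pair A (Nat.pair k r) := by rw [encode_five, Nat.pair_unpair, Nat.pair_unpair]
    rw [← he, e1]
  have hf : ∀ t ≤ w.rounds, (Code.prec C2 (Code.comp (Code.prec Q h0) h1)).eval
      (Nat.pair A (t + 1)) =
      Part.some (Nat.pair (v t) (Nat.pair (Nat.pair (s t) W + 1) i0)) := by
    intro t ht
    induction t with
    | zero =>
      have h : (Code.prec C2 (Code.comp (Code.prec Q h0) h1)).eval (Nat.pair A 0) =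
          Part.some (Nat.pair 0 (Nat.pair 0 i2)) := by
        rw [Code.eval_prec_zero, e2]
      rw [eval_prec_succ_of h, hD]
      simp only [Nat.unpair_pair, askFn, encode_two]
      rw [if_pos trivial, if_pos trivial, ← hs0, ← hW]
      exact hG _ _ _ (hstep 0 (by omega)).1
    | succ t ih =>
      rw [eval_prec_succ_of (ih (by omega)), hD]
      simp only [Nat.unpair_pair, askFn, encode_two]
      rw [if_neg (by omega), if_neg (by omega), Nat.add_sub_cancel, Nat.unpair_pair,
        ← (hstep t (by omega)).2]
      exact hG _ _ _ (hstep (t + 1) (by omega)).1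
  have hend := hf w.rounds le_rfl
  refine ⟨(v w.rounds, Nat.pair (s w.rounds) W + 1, i0), ?_, ?_, ?_⟩
  · simp only [infoFn, Nat.add_sub_cancel, Nat.unpair_pair, hW, hA]
    rw [← (hstep w.rounds (by omega)).2, hsT, hdec]
  · simp only [inputFn, Nat.add_sub_cancel, Nat.unpair_pair, hW, hA]
  · refine (eval_comp_of ((eval_comp_of (by rw [e3, ← hA])).trans hend)).trans ?_
    rw [← e4, encode_three]

/-! ### The amplification step -/

section

variable {σ : ℕ × ℕ →. Strat}

lemma partrec_sigma (hσ : Partrec σ) {β : Type} [Primcodable β] :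
    Partrec fun p : Adv × β => σ (p.1.2.1, p.1.2.2.1) := by
  have h2 : Computable fun p : Adv × β => p.1.2 := Computable.snd.comp Computable.fst
  have h3 : Computable fun p : Adv × β => p.1.2.1 := Computable.fst.comp h2
  have h4 : Computable fun p : Adv × β => p.1.2.2.1 :=
    Computable.fst.comp (Computable.snd.comp h2)
  have h := hσ.comp (h3.pair h4)
  exact h

lemma partrec_phi1 (hσ : Partrec σ) : Partrec fun p : Adv × ℕ × ℕ × ℕ × ℕ × ℕ × ℕ =>
    (σ (p.1.2.1, p.1.2.2.1)).map fun w => askFn w p.2.1 p.2.2 := by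
  have h := (partrec_sigma hσ).map primrec_askFn.to_comp.to₂
  exact h

lemma partrec_phi3 (hσ : Partrec σ) : Partrec fun p : Adv × ℕ × ℕ =>
    (σ (p.1.2.1, p.1.2.2.1)).map fun w => ((p.2.1, p.2.2), w.rounds + 1) := by
  have h1 : Primrec fun p : (Adv × ℕ × ℕ) × Strat => (p.1.2.1, p.1.2.2) :=
    Primrec.snd.comp Primrec.fst
  have h2 : Primrec fun p : (Adv × ℕ × ℕ) × Strat => p.2.rounds + 1 :=
    Primrec.succ.comp (Strat.primrec_rounds.comp Primrec.snd)
  have h3 := (h1.pair h2).to_comp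
  have h := (partrec_sigma hσ).map h3.to₂
  exact h

lemma partrec_phi4 (hσ : Partrec σ) : Partrec fun p : Adv × ℕ × ℕ × ℕ × ℕ =>
    (σ (p.1.2.1, p.1.2.2.1)).bind fun w =>
      univ p.1.1 (infoFn w p.1.2.2.1 p.1.2.2.2 p.2.1 p.2.2) (inputFn p.2.2) := by
  have h1 : Primrec fun p : (Adv × ℕ × ℕ × ℕ × ℕ) × Strat => p.1.1.1 :=
    Primrec.fst.comp (Primrec.fst.comp Primrec.fst)
  have h2 : Primrec fun p : (Adv × ℕ × ℕ × ℕ × ℕ) × Strat => inputFn p.1.2.2 :=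
    primrec_inputFn.comp (Primrec.snd.comp (Primrec.snd.comp Primrec.fst))
  have h3 := partrec_univ_comp h1.to_comp primrec_infoFn.to_comp h2.to_comp
  have h := (partrec_sigma hσ).bind h3.to₂
  exact h

end

/-- The amplification step: five nested constructors turn carriers of `m` bits at level `X0` into
carriers of `31 * m + ℓ` bits at level `X5`, where `2 ^ ℓ` codes below `X0` are distinguishable. -/
lemma Carry.step {X0 X1 X2 X3 X4 X5 m ℓ b ξ : ℕ → ℕ} (hξ : Primrec ξ)
    (hb : ∀ᶠ n in atTop, X0 n = ξ (b n)) (pb : PolyB b) (pm : PolyB m) (pℓ : PolyB ℓ)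
    (hℓ : ∀ᶠ n in atTop, 1 ≤ ℓ n) (hτ : ∀ᶠ n in atTop, 2 ^ ℓ n ≤ tau (X0 n))
    (h01 : ∀ᶠ n in atTop, 4 * X0 n ^ 2 + 3 ≤ X1 n) (h12 : ∀ᶠ n in atTop, 4 * X1 n ^ 2 + 3 ≤ X2 n)
    (h23 : ∀ᶠ n in atTop, 4 * X2 n ^ 2 + 3 ≤ X3 n) (h34 : ∀ᶠ n in atTop, 4 * X3 n ^ 2 + 3 ≤ X4 n)
    (h45 : ∀ᶠ n in atTop, 4 * X4 n ^ 2 + 3 ≤ X5 n) (H : Carry X0 m) :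
    Carry X5 fun n => 31 * m n + ℓ n := by
  obtain ⟨σ, hσ, hσs⟩ := exists_partrec_strat hξ
  have H1 := H.double h01 pm
  have H2 := H1.double h12 (pm.const_mul 2)
  have H3 := H2.double h23 ((pm.const_mul 2).const_mul 2)
  have H4 := H3.double h34 (((pm.const_mul 2).const_mul 2).const_mul 2)
  have p2 : Computable fun p : ℕ × ℕ × ℕ => (0, 0, p.2.1) := by
    have h := (Computable.const (α := ℕ × ℕ × ℕ) 0).pair ((Computable.const (α := ℕ × ℕ × ℕ) 0).pair
      (Computable.fst.comp Computable.snd))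
    exact h
  intro C
  obtain ⟨D, hD⟩ : ∃ D, ∀ᶠ n in atTop, Nat.pair (n ^ C) (Nat.pair (b n) (Nat.pair (ℓ n) (m n))) ≤
      n ^ D := PolyB.pair ⟨C, Eventually.of_forall fun _ => le_rfl⟩ (pb.pair (pℓ.pair pm))
  filter_upwards [H.use primrec_outFn.to_comp.partrec 0, H1.use (partrec_phi1 hσ) D,
    H2.use p2.partrec 0, H3.use (partrec_phi3 hσ) D, H4.use (partrec_phi4 hσ) D, hb, hℓ, hτ,
    h01, h12, h23, h34, h45, hD] with n k0 k1 k2 k3 k4 hb hℓ hτ h01 h12 h23 h34 h45 hD a ha i hi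
  obtain ⟨w, hw, hσw⟩ := hσs (b n) (ℓ n) (hb ▸ exists_strat_of_le_tau hℓ hτ)
  have hadv : encode ((a, b n, ℓ n, m n) : Adv) ≤ n ^ D :=
    le_trans (pair_mono ha le_rfl) hD
  obtain ⟨M, hM⟩ : ∃ M, M = m n := ⟨_, rfl⟩
  rw [← hM] at hadv
  simp only [← hM] at k0 k1 k2 k3 k4 hi
  have e4 : 2 * (2 * M) = 4 * M := by omega
  have e8 : 2 * (4 * M) = 8 * M := by omega
  have e16 : 2 * (8 * M) = 16 * M := by omega
  simp only [e4, e8, e16] at k2 k3 k4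
  -- The information `i` is cut into pieces of `ℓ`, `m`, `2 * m`, `4 * m`, `8 * m` and `16 * m` bits.
  obtain ⟨j0, hj0⟩ : ∃ j, j = i / 2 ^ ℓ n := ⟨_, rfl⟩
  obtain ⟨j1, hj1⟩ : ∃ j, j = j0 / 2 ^ M := ⟨_, rfl⟩
  obtain ⟨j2, hj2⟩ : ∃ j, j = j1 / 2 ^ (2 * M) := ⟨_, rfl⟩
  obtain ⟨j3, hj3⟩ : ∃ j, j = j2 / 2 ^ (4 * M) := ⟨_, rfl⟩
  obtain ⟨j4, hj4⟩ : ∃ j, j = j3 / 2 ^ (8 * M) := ⟨_, rfl⟩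
  have b0 : j0 < 2 ^ (31 * M) := hj0 ▸ lt_two_pow_add (by rwa [add_comm])
  have b1 : j1 < 2 ^ (30 * M) :=
    hj1 ▸ lt_two_pow_add (b0.trans_eq (congrArg (2 ^ ·) (by omega)))
  have b2 : j2 < 2 ^ (28 * M) :=
    hj2 ▸ lt_two_pow_add (b1.trans_eq (congrArg (2 ^ ·) (by omega)))
  have b3 : j3 < 2 ^ (24 * M) :=
    hj3 ▸ lt_two_pow_add (b2.trans_eq (congrArg (2 ^ ·) (by omega)))
  have b4 : j4 < 2 ^ (16 * M) :=
    hj4 ▸ lt_two_pow_add (b3.trans_eq (congrArg (2 ^ ·) (by omega)))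
  have hmod (x p : ℕ) : x % 2 ^ p < 2 ^ p := Nat.mod_lt _ (by positivity)
  have hglue : glue (ℓ n) (i % 2 ^ ℓ n) (glue M (j0 % 2 ^ M) (glue (2 * M) (j1 % 2 ^ (2 * M))
      (glue (4 * M) (j2 % 2 ^ (4 * M)) (glue (8 * M) (j3 % 2 ^ (8 * M)) j4)))) = i := by
    rw [hj4, glue_mod_div, hj3, glue_mod_div, hj2, glue_mod_div, hj1, glue_mod_div, hj0,
      glue_mod_div]
  obtain ⟨hQ, hrun⟩ := hw _ (hmod i (ℓ n))
  obtain ⟨Q, hQe⟩ : ∃ Q, Q = ofNat Code (w.idx (i % 2 ^ ℓ n)) := ⟨_, rfl⟩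
  rw [← hQe] at hrun
  have hQ' : encode Q < X0 n := by rw [hQe, encode_ofNat, hb]; exact hQ
  obtain ⟨h0, l0, v0⟩ := k0 0 (Nat.zero_le _) _ (hmod j0 M)
  obtain ⟨h1, l1, v1⟩ := k1 _ hadv _ (hmod j1 (2 * M))
  obtain ⟨h2, l2, v2⟩ := k2 0 (Nat.zero_le _) _ (hmod j2 (4 * M))
  obtain ⟨h3, l3, v3⟩ := k3 _ hadv _ (hmod j3 (8 * M))
  obtain ⟨h4, l4, v4⟩ := k4 _ hadv _ b4
  refine ⟨runner Q h0 h1 h2 h3 h4, encode_comp_lt l4 (encode_comp_lt (encode_prec_lt l2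
    (encode_comp_lt (encode_prec_lt hQ' l0 h01) l1 h12) h23) l3 h34) h45, fun z => ?_⟩
  have c0 : ∀ x, h0.eval (encode x) = Part.some (encode (outFn (j0 % 2 ^ M) x)) := fun x =>
    (v0 x).trans (Part.map_some _ _)
  have c1 : ∀ x, h1.eval (encode x) = Part.some (encode (askFn w (j1 % 2 ^ (2 * M)) x)) := by
    intro x
    rw [v1 x, hσw, Part.map_some, Part.map_some]
  have c2 : ∀ y : ℕ, h2.eval y = Part.some (Nat.pair 0 (Nat.pair 0 (j2 % 2 ^ (4 * M)))) :=
    fun y => (v2 y).trans (Part.map_some _ _)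
  have c3 : h3.eval z =
      Part.some (Nat.pair (Nat.pair (j3 % 2 ^ (8 * M)) z) (w.rounds + 1)) := by
    refine (v3 z).trans ?_
    rw [hσw, Part.map_some, Part.map_some]
    rfl
  have c4 : ∀ x, h4.eval (encode x) = univ a (infoFn w (ℓ n) M j4 x) (inputFn x) := by
    intro x
    rw [v4 x, hσw, Part.bind_some, map_encode_nat]
  obtain ⟨x, hx, hx', hx''⟩ := runner_eval (ℓ := ℓ n) (m := M) (i4 := j4) hrun c0 c1 c2 c3 c4
  rw [hx'', hx, hx', hglue]

/-! ### Levels of code size, and iteration of the amplification step -/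

lemma eventually_pow_lt (c D : ℕ) (hc : 0 < c) : ∀ᶠ n : ℕ in atTop, n ^ D < 2 ^ (n / c) := by
  have h1 := tendsto_pow_const_div_const_pow_of_one_lt D (r := (2 : ℝ)) (by norm_num)
  have h2 : (0 : ℝ) < 1 / ((2 * c : ℕ) : ℝ) ^ D := by positivity
  have h3 : ∀ᶠ t : ℕ in atTop, (2 * c * t) ^ D < 2 ^ t := by
    filter_upwards [h1.eventually (gt_mem_nhds h2)] with t ht
    rw [div_lt_div_iff₀ (by positivity) (by positivity), one_mul, ← mul_pow] at ht
    rw [mul_comm]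
    exact_mod_cast ht
  have h4 : Tendsto (fun n : ℕ => n / c) atTop atTop := Nat.tendsto_div_const_atTop hc.ne'
  filter_upwards [h4.eventually h3, eventually_ge_atTop c] with n hn hcn
  refine lt_of_le_of_lt (Nat.pow_le_pow_left ?_ D) hn
  have h5 := Nat.div_add_mod n c
  have h6 := Nat.mod_lt n hc
  have h7 : 1 ≤ n / c := (Nat.one_le_div_iff hc).2 hcn
  calc n ≤ c * (n / c) + c * 1 := by omega
    _ ≤ c * (n / c) + c * (n / c) := by gcongr
    _ = _ := by ring

lemma PolyB.eventually_size {f : ℕ → ℕ} (hf : PolyB f) (c : ℕ) :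
    ∀ᶠ n in atTop, c * Nat.size (f n) ≤ n := by
  obtain ⟨D, hD⟩ := hf
  filter_upwards [hD, eventually_pow_lt (c + 1) D (by omega)] with n h1 h2
  have h3 : Nat.size (f n) ≤ n / (c + 1) := Nat.size_le.2 (h1.trans_lt h2)
  calc c * Nat.size (f n) ≤ (c + 1) * (n / (c + 1)) := Nat.mul_le_mul (by omega) h3
    _ ≤ n := Nat.mul_div_le _ _

lemma tau_le (X : ℕ) : tau X ≤ X := by
  induction X with
  | zero => simp [tau_zero]
  | succ X ih => exact (tau_succ_le _).trans (by omega)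

/-- The size bound `k` constructors below `2 ^ s`. -/
def lev : ℕ → ℕ → ℕ
  | 0, s => 2 ^ s
  | k + 1, s => Nat.sqrt ((lev k s - 3) / 4)

lemma primrec_lev (k : ℕ) : Primrec (lev k) := by
  induction k with
  | zero => exact primrec_two_pow
  | succ k ih =>
    have h := Primrec.nat_sqrt.comp (Primrec.nat_div.comp
      (Primrec.nat_sub.comp ih (Primrec.const 3)) (Primrec.const 4))
    exact h

lemma lev_succ_sq {k s : ℕ} (h : 3 ≤ lev k s) : 4 * lev (k + 1) s ^ 2 + 3 ≤ lev k s := by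
  have h1 : lev (k + 1) s ^ 2 ≤ (lev k s - 3) / 4 := Nat.sqrt_le' _
  omega

lemma lev_le_sq (k s : ℕ) : lev k s ≤ 4 * (lev (k + 1) s + 1) ^ 2 + 3 := by
  have h1 : (lev k s - 3) / 4 < (lev (k + 1) s + 1) ^ 2 := Nat.lt_succ_sqrt' _
  omega

lemma lev_le (k s : ℕ) : lev k s ≤ 2 ^ s := by
  induction k with
  | zero => exact le_rfl
  | succ k ih =>
    have h1 : lev (k + 1) s ≤ (lev k s - 3) / 4 := Nat.sqrt_le_self _
    omega

/-- Admissible size parameters: polynomially bounded, but so large that codes of twice the length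
can be distinguished in `2 ^ n` ways. -/
structure Admissible (s : ℕ → ℕ) : Prop where
  poly : PolyB s
  large : ∀ᶠ n in atTop, 2 ^ n ≤ tau (2 ^ (2 * s n + 2))

/-- The number of bits in which codes at level `k` can be distinguished. -/
noncomputable def bits (s : ℕ → ℕ) (k n : ℕ) : ℕ := Nat.log 2 (tau (lev k (s n)))

/-- The logarithmic loss of each level. -/
def loss (s : ℕ → ℕ) (n : ℕ) : ℕ := Nat.size (28 * (s n + 2))

section

variable {s : ℕ → ℕ}

lemma bits_le (k n : ℕ) : bits s k n ≤ s n := by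
  have h := Nat.log_mono_right (b := 2) ((tau_le _).trans (lev_le k (s n)))
  rwa [Nat.log_pow (by norm_num)] at h

lemma Admissible.loss_small (hs : Admissible s) (c : ℕ) :
    ∀ᶠ n in atTop, c * loss s n ≤ n :=
  ((hs.poly.add (PolyB.const 2)).const_mul 28).eventually_size c

lemma Admissible.le_size (hs : Admissible s) : ∀ᶠ n in atTop, n / 4 ≤ s n := by
  filter_upwards [hs.large, eventually_ge_atTop 4] with n h hn
  have := (Nat.pow_le_pow_iff_right (by norm_num)).1 (h.trans (tau_le _))
  omega

lemma Admissible.lev_large (hs : Admissible s) (k D : ℕ) :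
    ∀ᶠ n in atTop, n ^ D ≤ lev k (s n) := by
  induction k generalizing D with
  | zero =>
    filter_upwards [hs.le_size, eventually_pow_lt 4 D (by norm_num)] with n h1 h2
    exact h2.le.trans (Nat.pow_le_pow_right (by norm_num) h1)
  | succ k ih =>
    filter_upwards [ih (2 * D + 3), eventually_ge_atTop 2] with n h1 h2
    refine Nat.le_sqrt'.2 ((Nat.le_div_iff_mul_le (by norm_num)).2 ?_)
    have e : n ^ (2 * D + 3) = (n ^ D) ^ 2 * n ^ 3 := by rw [pow_add, pow_mul', ]
    have h8 : 2 ^ 3 ≤ n ^ 3 := Nat.pow_le_pow_left h2 3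
    have h9 : 1 ≤ (n ^ D) ^ 2 := Nat.one_le_pow _ _ (Nat.pow_pos (by omega))
    have : (n ^ D) ^ 2 * 8 ≤ (n ^ D) ^ 2 * n ^ 3 := Nat.mul_le_mul le_rfl h8
    omega

lemma Admissible.lev_sq (hs : Admissible s) (k : ℕ) :
    ∀ᶠ n in atTop, 4 * lev (k + 1) (s n) ^ 2 + 3 ≤ lev k (s n) := by
  filter_upwards [hs.lev_large k 1, eventually_ge_atTop 3] with n h1 h2
  exact lev_succ_sq (h2.trans (by simpa using h1))

lemma two_pow_bits_le {k n : ℕ} (h : 0 < lev k (s n)) : 2 ^ bits s k n ≤ tau (lev k (s n)) :=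
  Nat.pow_log_le_self 2 (Nat.ne_of_gt (tau_pos h))

lemma bits_zero {n : ℕ} (h : 2 ^ n ≤ tau (2 ^ (2 * s n + 2))) :
    n ≤ 2 * bits s 0 n + 2 * loss s n := by
  have e : 2 ^ (2 * s n + 2) = 4 * (2 ^ s n) ^ 2 := by rw [pow_add, pow_mul']; ring
  have h1 := tau_le_sq (V := 2 ^ s n) (by positivity) (2 ^ (2 * s n + 2)) (by omega)
  rw [Nat.size_pow] at h1
  have h2 : tau (2 ^ s n) < 2 ^ (bits s 0 n + 1) := Nat.lt_pow_succ_log_self (by norm_num) _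
  have h3 : tau (2 ^ s n) ^ 2 ≤ (2 ^ (bits s 0 n + 1)) ^ 2 := Nat.pow_le_pow_left h2.le 2
  have h4 : 28 * (s n + 2) < 2 ^ loss s n := Nat.lt_size_self _
  have h5 : 2 ^ n < 2 ^ (2 * bits s 0 n + 2 * loss s n + 1) := by
    calc 2 ^ n ≤ (2 * s n + 2 + 1) * (7 * (2 ^ (bits s 0 n + 1)) ^ 2) :=
          (h.trans h1).trans (by gcongr)
      _ = (28 * (2 * s n + 3)) * 2 ^ (2 * bits s 0 n) := by
        rw [pow_succ 2 (bits s 0 n), pow_mul' 2 2]; ring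
      _ ≤ (2 * (28 * (s n + 2))) * 2 ^ (2 * bits s 0 n) := Nat.mul_le_mul_right _ (by omega)
      _ < (2 * 2 ^ (2 * loss s n)) * 2 ^ (2 * bits s 0 n) := by
        have : 2 ^ loss s n ≤ 2 ^ (2 * loss s n) := Nat.pow_le_pow_right (by norm_num) (by omega)
        gcongr
        omega
      _ = _ := by rw [pow_succ, pow_add]; ring
  have := (Nat.pow_lt_pow_iff_right (by norm_num)).1 h5
  omega

lemma bits_succ {k n : ℕ} (hk : 0 < lev (k + 1) (s n)) :
    bits s k n ≤ 2 * bits s (k + 1) n + 2 * loss s n := by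
  obtain ⟨X, hX⟩ : ∃ X, X = lev k (s n) := ⟨_, rfl⟩
  obtain ⟨Y, hY⟩ : ∃ Y, Y = lev (k + 1) (s n) := ⟨_, rfl⟩
  have hXY : X ≤ 4 * (Y + 1) ^ 2 + 3 := hX ▸ hY ▸ lev_le_sq k (s n)
  have h1 := tau_le_sq (V := Y + 1) (by omega) X hXY
  have h0 : 0 < X := by
    by_contra h
    rw [Nat.not_lt, Nat.le_zero] at h
    have : lev (k + 1) (s n) ≤ (lev k (s n) - 3) / 4 := Nat.sqrt_le_self _
    omega
  have hsz : Nat.size X ≤ s n + 1 := (Nat.size_le_size (hX ▸ lev_le k (s n))).trans Nat.size_pow.le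
  have h2 : tau Y < 2 ^ (bits s (k + 1) n + 1) := by
    rw [hY]; exact Nat.lt_pow_succ_log_self (by norm_num) _
  have h3 : tau (Y + 1) ^ 2 ≤ (2 ^ (bits s (k + 1) n + 1)) ^ 2 :=
    Nat.pow_le_pow_left ((tau_succ_le _).trans h2) 2
  have h4 : 28 * (s n + 2) < 2 ^ loss s n := Nat.lt_size_self _
  have h6 : 2 ^ bits s k n ≤ tau X := by
    rw [hX] at h0 ⊢; exact two_pow_bits_le h0
  have h5 : 2 ^ bits s k n < 2 ^ (2 * bits s (k + 1) n + 2 * loss s n + 1) := by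
    calc 2 ^ bits s k n ≤ (s n + 1) * (7 * (2 ^ (bits s (k + 1) n + 1)) ^ 2) :=
          (h6.trans h1).trans (by gcongr)
      _ = (28 * (s n + 1)) * 2 ^ (2 * bits s (k + 1) n) := by
        rw [pow_succ 2 (bits s (k + 1) n), pow_mul' 2 2]; ring
      _ ≤ (2 * (28 * (s n + 2))) * 2 ^ (2 * bits s (k + 1) n) := Nat.mul_le_mul_right _ (by omega)
      _ < (2 * 2 ^ (2 * loss s n)) * 2 ^ (2 * bits s (k + 1) n) := by
        have : 2 ^ loss s n ≤ 2 ^ (2 * loss s n) := Nat.pow_le_pow_right (by norm_num) (by omega)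
        gcongr
        omega
      _ = _ := by rw [pow_succ, pow_add]; ring
  have := (Nat.pow_lt_pow_iff_right (by norm_num)).1 h5
  omega

/-- Each level halves the number of bits, up to the logarithmic loss. -/
lemma Admissible.le_bits (hs : Admissible s) (k : ℕ) :
    ∃ c, ∀ᶠ n in atTop, n ≤ 2 ^ (k + 1) * bits s k n + c * loss s n := by
  induction k with
  | zero => exact ⟨2, by filter_upwards [hs.large] with n h; simpa using bits_zero h⟩
  | succ k ih =>
    obtain ⟨c, hc⟩ := ih
    refine ⟨2 ^ (k + 1) * 2 + c, ?_⟩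
    filter_upwards [hc, hs.lev_large (k + 1) 1, eventually_ge_atTop 1] with n h1 h2 h3
    rw [pow_one] at h2
    have h4 := Nat.mul_le_mul_left (2 ^ (k + 1)) (bits_succ (k := k) (h3.trans h2))
    calc n ≤ _ := h1.trans (Nat.add_le_add_right h4 _)
      _ = _ := by rw [pow_succ 2 (k + 1)]; ring

/-- The number of bits carried at level `k` after `R` amplification steps. -/
noncomputable def amount (s : ℕ → ℕ) : ℕ → ℕ → ℕ → ℕ
  | 0, _, _ => 0
  | R + 1, k, n => 31 * amount s R (k + 5) n + bits s (k + 5) n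

lemma Admissible.polyB_amount (hs : Admissible s) (R k : ℕ) : PolyB (amount s R k) := by
  induction R generalizing k with
  | zero => exact PolyB.const 0
  | succ R ih =>
    exact ((ih (k + 5)).const_mul 31).add
      (hs.poly.mono (Eventually.of_forall fun n => bits_le (k + 5) n))

lemma Admissible.carry (hs : Admissible s) (R k : ℕ) :
    Carry (fun n => lev k (s n)) (amount s R k) := by
  induction R generalizing k with
  | zero => exact carry_base (hs.lev_large k)
  | succ R ih =>
    have pℓ : PolyB (bits s (k + 5)) :=
      hs.poly.mono (Eventually.of_forall fun n => bits_le (k + 5) n)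
    have hℓ : ∀ᶠ n in atTop, 1 ≤ bits s (k + 5) n := by
      obtain ⟨c, hc⟩ := hs.le_bits (k + 5)
      filter_upwards [hc, hs.loss_small (2 * c), eventually_ge_atTop 1] with n h1 h2 h3
      by_contra h
      have h0 : bits s (k + 5) n = 0 := by omega
      rw [h0, mul_zero, zero_add] at h1
      rw [mul_assoc] at h2
      omega
    have hτ : ∀ᶠ n in atTop, 2 ^ bits s (k + 5) n ≤ tau (lev (k + 5) (s n)) := by
      filter_upwards [hs.lev_large (k + 5) 1, eventually_ge_atTop 1] with n h2 h3
      rw [pow_one] at h2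
      exact two_pow_bits_le (h3.trans h2)
    exact Carry.step (primrec_lev (k + 5)) (Eventually.of_forall fun n => rfl) hs.poly
      (hs.polyB_amount R (k + 5)) pℓ hℓ hτ (hs.lev_sq (k + 4)) (hs.lev_sq (k + 3))
      (hs.lev_sq (k + 2)) (hs.lev_sq (k + 1)) (hs.lev_sq k) (ih (k + 5))

lemma Admissible.le_amount (hs : Admissible s) (R k : ℕ) : ∃ c, ∀ᶠ n in atTop,
    32 ^ R * n ≤ 31 ^ R * n + 32 ^ R * 2 ^ (k + 1) * amount s R k n + c * loss s n := by
  induction R generalizing k with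
  | zero => exact ⟨0, Eventually.of_forall fun n => by simp⟩
  | succ R ih =>
    obtain ⟨c, hc⟩ := ih (k + 5)
    obtain ⟨d, hd⟩ := hs.le_bits (k + 5)
    refine ⟨31 * c + 32 ^ R * d, ?_⟩
    filter_upwards [hc, hd] with n h1 h2
    have h3 := Nat.add_le_add (Nat.mul_le_mul_left 31 h1) (Nat.mul_le_mul_left (32 ^ R) h2)
    calc 32 ^ (R + 1) * n = 31 * (32 ^ R * n) + 32 ^ R * n := by rw [pow_succ]; ring
      _ ≤ _ := h3
      _ = _ := by
        rw [amount, pow_succ 31, pow_succ 32, pow_add 2 (k + 1) 5]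
        ring

/-- Iterating the amplification step often enough brings the information carried by codes below
`2 ^ s` close to `n / 2` bits. -/
lemma Admissible.exists_carry (hs : Admissible s) : ∃ m : ℕ → ℕ,
    Carry (fun n => 2 ^ s n) m ∧ ∀ᶠ n in atTop, 255 * n < 512 * m n := by
  refine ⟨_, hs.carry 219 0, ?_⟩
  obtain ⟨c, hc⟩ := hs.le_amount 219 0
  filter_upwards [hc, hs.loss_small (2 * c), eventually_ge_atTop 1] with n h1 h2 h3
  generalize amount s 219 0 n = m at *
  have h4 : 1024 * 31 ^ 219 ≤ 32 ^ 219 := by norm_num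
  have h5 : 1000 ≤ 32 ^ 219 := by norm_num
  generalize 32 ^ 219 = A at *
  generalize 31 ^ 219 = B at *
  rw [mul_assoc] at h2
  generalize c * loss s n = x at *
  have h6 : 1024 * B * n ≤ A * n := Nat.mul_le_mul_right n h4
  have h7 : 1000 * n ≤ A * n := Nat.mul_le_mul_right n h5
  have h8 : A * (255 * n) < A * (512 * m) := by
    have e1 : A * (255 * n) = 255 * (A * n) := by ring
    have e2 : A * (512 * m) = 256 * (A * 2 ^ (0 + 1) * m) := by ring
    have e3 : 1024 * B * n = 1024 * (B * n) := by ring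
    rw [e1, e2]
    rw [e3] at h6
    omega
  exact lt_of_mul_lt_mul_left h8 (Nat.zero_le _)

end

/-! ### Waiting for all short programs to halt -/

lemma primrec_count {α : Type} [Primcodable α] {R : ℕ → α → Prop} {f : α → ℕ}
    [∀ a, DecidablePred fun i => R i a] (hf : Primrec f) (hR : PrimrecRel R) :
    Primrec fun a => ((Finset.range (f a)).filter fun i => R i a).card := by
  classical
  have h1 := Primrec₂.comp hR.listFilter (Primrec.list_range.comp hf) Primrec.id
  refine (Primrec.list_length.comp h1).of_eq fun a => ?_
  have e : (List.range (f a)).filter (fun i => decide (R i a)) =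
      (List.range (f a)).filter (fun i => decide (R i (id a))) := rfl
  rw [← e, ← List.toFinset_card_of_nodup (List.nodup_range.filter _), List.toFinset_filter]
  congr 1
  ext i
  simp

/-- The normal form with number `d` is known at time `t`: all its preimages of length at most `L`
have halted. -/
def Known (L t d : ℕ) : Prop :=
  (∃ e < 2 ^ L, encode (nf (ofNat Code e)) = d) ∧
    ∀ e < 2 ^ L, encode (nf (ofNat Code e)) = d → (Code.evaln t (ofNat Code e) 0).isSome = true

open Classical in
/-- The number of normal forms known at time `t`. -/
noncomputable def knownNum (L t : ℕ) : ℕ := ((Finset.range (2 ^ L)).filter (Known L t)).card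

open Classical in
/-- The normal forms of halting codes of length at most `L`. -/
noncomputable def haltForms (L : ℕ) : Finset ℕ :=
  (Finset.range (2 ^ L)).filter fun d =>
    ∃ e < 2 ^ L, encode (nf (ofNat Code e)) = d ∧ ((ofNat Code e).eval 0).Dom

lemma known_subset (L t : ℕ) [DecidablePred (Known L t)] :
    (Finset.range (2 ^ L)).filter (Known L t) ⊆ haltForms L := by
  classical
  intro d hd
  obtain ⟨h1, ⟨e, he, hed⟩, h2⟩ := Finset.mem_filter.1 hd
  refine Finset.mem_filter.2 ⟨h1, e, he, hed, ?_⟩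
  obtain ⟨v, hv⟩ := Option.isSome_iff_exists.1 (h2 e he hed)
  exact Part.dom_iff_mem.2 ⟨v, Code.evaln_sound hv⟩

lemma isSome_of_knownNum {L t : ℕ} (h : (haltForms L).card ≤ knownNum L t) {e : Code}
    (he : encode e < 2 ^ L) (hd : (e.eval 0).Dom) : (Code.evaln t e 0).isSome = true := by
  classical
  have heq := Finset.eq_of_subset_of_card_le (known_subset L t) h
  have hm : encode (nf e) ∈ haltForms L := by
    refine Finset.mem_filter.2 ⟨Finset.mem_range.2 ((encode_nf_le e).trans_lt he),
      encode e, he, ?_, ?_⟩ <;> rw [ofNat_encode]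
    exact hd
  rw [← heq] at hm
  have := (Finset.mem_filter.1 hm).2.2 (encode e) he (by rw [ofNat_encode])
  rwa [ofNat_encode] at this

lemma exists_time (L : ℕ) : ∃ t, (haltForms L).card ≤ knownNum L t := by
  classical
  have h : ∀ e : ℕ, ∃ k, ((ofNat Code e).eval 0).Dom →
      (Code.evaln k (ofNat Code e) 0).isSome = true := by
    intro e
    by_cases hd : ((ofNat Code e).eval 0).Dom
    · obtain ⟨k, hk⟩ := Code.evaln_complete.1 (Part.get_mem hd)
      exact ⟨k, fun _ => Option.isSome_iff_exists.2 ⟨_, hk⟩⟩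
    · exact ⟨0, fun h => absurd h hd⟩
  choose κ hκ using h
  obtain ⟨t, ht⟩ := exists_bound (Finset.range (2 ^ L)) 1 fun e _ => κ e
  refine ⟨t, Finset.card_le_card fun d hd => ?_⟩
  obtain ⟨h1, e, he, hed, hdom⟩ := Finset.mem_filter.1 hd
  refine Finset.mem_filter.2 ⟨h1, ⟨e, he, hed⟩, fun e' he' hed' => ?_⟩
  have hdom' : ((ofNat Code e').eval 0).Dom := by
    have h2 : nf (ofNat Code e') = nf (ofNat Code e) := encode_injective (hed'.trans hed.symm)
    rw [← eval_nf, h2, eval_nf]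
    exact hdom
  obtain ⟨v, hv⟩ := Option.isSome_iff_exists.1 (hκ e' hdom')
  exact Option.isSome_iff_exists.2
    ⟨v, Code.evaln_mono (ht e' (Finset.mem_range.2 he') 0 one_pos).le hv⟩

/-- The halting information needs only as many bits as there are normal forms. -/
lemma card_haltForms_le (L : ℕ) : (haltForms L).card ≤ redNum (2 ^ L) := by
  classical
  refine (Finset.card_le_card fun d hd => ?_).trans (Finset.card_image_le (f := encode))
  obtain ⟨h1, e, he, hed, -⟩ := Finset.mem_filter.1 hd
  refine Finset.mem_image.2 ⟨_, mem_redBelow.2 ⟨?_, red_nf _⟩, hed⟩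
  rw [hed]
  exact Finset.mem_range.1 h1

lemma primrec_form {α : Type} [Primcodable α] {f : α → ℕ} (hf : Primrec f) :
    Primrec fun a => encode (nf (ofNat Code (f a))) :=
  Primrec.encode.comp (primrec_nf.comp ((Primrec.ofNat Code).comp hf))

lemma primrecRel_known : PrimrecRel fun (d : ℕ) (p : ℕ × ℕ) => Known p.1 p.2 d := by
  have hL : Primrec fun q : ℕ × ℕ × ℕ => 2 ^ q.2.1 :=
    primrec_two_pow_comp (Primrec.fst.comp Primrec.snd)
  have hd : Primrec fun r : ℕ × ℕ × ℕ × ℕ => r.2.1 := Primrec.fst.comp Primrec.snd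
  have ht : Primrec fun r : ℕ × ℕ × ℕ × ℕ => r.2.2.2 :=
    Primrec.snd.comp (Primrec.snd.comp Primrec.snd)
  have h1 : PrimrecPred fun r : ℕ × ℕ × ℕ × ℕ => encode (nf (ofNat Code r.1)) = r.2.1 :=
    Primrec.eq.comp (primrec_form Primrec.fst) hd
  have h2 : PrimrecPred fun r : ℕ × ℕ × ℕ × ℕ =>
      (Code.evaln r.2.2.2 (ofNat Code r.1) 0).isSome = true := by
    have h20 := primrec_evaln_comp ht ((Primrec.ofNat Code).comp Primrec.fst) (Primrec.const 0)
    have h21 := Primrec.option_isSome.comp h20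
    have h22 := Primrec.eq.comp h21 (Primrec.const true)
    exact h22
  have h3 : PrimrecRel fun (e : ℕ) (q : ℕ × ℕ × ℕ) => encode (nf (ofNat Code e)) = q.1 := h1
  have h4 : PrimrecRel fun (e : ℕ) (q : ℕ × ℕ × ℕ) => encode (nf (ofNat Code e)) = q.1 →
      (Code.evaln q.2.2 (ofNat Code e) 0).isSome = true := by
    have h40 := h1.not.or h2
    exact PrimrecPred.of_eq h40 fun r => imp_iff_not_or.symm
  exact (primrecPred_exists_lt hL h3).and (primrecPred_forall_lt hL h4)

lemma primrec_knownNum : Primrec fun p : ℕ × ℕ => knownNum p.1 p.2 := by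
  classical
  have h := primrec_count (primrec_two_pow_comp Primrec.fst) primrecRel_known
  exact h.of_eq fun p => by rw [knownNum]

/-- The target of the search with advice `a = ((n, s, L), q)`: a time `w.1` at which `q` normal
forms are known, and a number `w.2 < 2 ^ n` not produced within that time by codes of length at
most `2 * s`. -/
def Target (a : (ℕ × ℕ × ℕ) × ℕ) (w : ℕ × ℕ) : Prop :=
  a.2 ≤ knownNum a.1.2.2 w.1 ∧ w.2 < 2 ^ a.1.1 ∧
    ∀ c < 2 ^ (2 * a.1.2.1), Code.evaln w.1 (ofNat Code c) 0 ≠ some w.2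

lemma primrecPred_target :
    PrimrecPred fun p : ((ℕ × ℕ × ℕ) × ℕ) × ℕ × ℕ => Target p.1 p.2 := by
  have h0 : Primrec fun p : ((ℕ × ℕ × ℕ) × ℕ) × ℕ × ℕ => p.1.1 := Primrec.fst.comp Primrec.fst
  have hn : Primrec fun p : ((ℕ × ℕ × ℕ) × ℕ) × ℕ × ℕ => p.1.1.1 := Primrec.fst.comp h0
  have hs : Primrec fun p : ((ℕ × ℕ × ℕ) × ℕ) × ℕ × ℕ => p.1.1.2.1 :=
    Primrec.fst.comp (Primrec.snd.comp h0)
  have hL : Primrec fun p : ((ℕ × ℕ × ℕ) × ℕ) × ℕ × ℕ => p.1.1.2.2 :=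
    Primrec.snd.comp (Primrec.snd.comp h0)
  have hq : Primrec fun p : ((ℕ × ℕ × ℕ) × ℕ) × ℕ × ℕ => p.1.2 := Primrec.snd.comp Primrec.fst
  have ht : Primrec fun p : ((ℕ × ℕ × ℕ) × ℕ) × ℕ × ℕ => p.2.1 := Primrec.fst.comp Primrec.snd
  have hx : Primrec fun p : ((ℕ × ℕ × ℕ) × ℕ) × ℕ × ℕ => p.2.2 := Primrec.snd.comp Primrec.snd
  have h1 : Primrec fun p : ((ℕ × ℕ × ℕ) × ℕ) × ℕ × ℕ => knownNum p.1.1.2.2 p.2.1 :=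
    primrec_knownNum.comp (hL.pair ht)
  have hc : PrimrecRel fun (c : ℕ) (p : ((ℕ × ℕ × ℕ) × ℕ) × ℕ × ℕ) =>
      Code.evaln p.2.1 (ofNat Code c) 0 ≠ some p.2.2 := by
    have h20 := primrec_evaln_comp (ht.comp Primrec.snd)
      ((Primrec.ofNat Code).comp (Primrec.fst (α := ℕ))) (Primrec.const 0)
    have h21 := Primrec.option_some.comp (hx.comp (Primrec.snd (α := ℕ)))
    have h22 := (Primrec.eq.comp h20 h21).not
    exact h22
  have h3 := primrecPred_forall_lt
    (primrec_two_pow_comp (Primrec.nat_mul.comp (Primrec.const 2) hs)) hc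
  exact (Primrec.nat_le.comp hq h1).and ((Primrec.nat_lt.comp hx (primrec_two_pow_comp hn)).and h3)

/-- Codes of length at most `2 * s` cannot produce all numbers below `2 ^ n`. -/
lemma exists_missed {n s : ℕ} (h : tau (2 ^ (2 * s)) < 2 ^ n) (t : ℕ) :
    ∃ x < 2 ^ n, ∀ c < 2 ^ (2 * s), Code.evaln t (ofNat Code c) 0 ≠ some x := by
  classical
  by_contra hcon
  push Not at hcon
  choose! c hc hc' using hcon
  have hev : ∀ x < 2 ^ n, (ofNat Code (c x)).eval 0 = Part.some x := fun x hx =>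
    Part.eq_some_iff.2 (Code.evaln_sound (hc' x hx))
  have hval : ∀ x < 2 ^ n, val (ofNat Code (c x)) 0 = x := by
    intro x hx
    rw [val, dif_pos (by rw [hev x hx]; trivial)]
    simp [hev x hx]
  have hsd : SD ((Finset.range (2 ^ n)).image fun x => ofNat Code (c x)) := by
    refine sd_of_eval_zero (f := fun d => val d 0) ?_ ?_
    · intro d hd
      obtain ⟨x, hx, rfl⟩ := Finset.mem_image.1 hd
      rw [hval x (Finset.mem_range.1 hx), hev x (Finset.mem_range.1 hx)]
    · intro d hd d' hd' hdd
      obtain ⟨x, hx, rfl⟩ := Finset.mem_image.1 hd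
      obtain ⟨y, hy, rfl⟩ := Finset.mem_image.1 hd'
      have hdd' : val (ofNat Code (c x)) 0 = val (ofNat Code (c y)) 0 := hdd
      rw [hval x (Finset.mem_range.1 hx), hval y (Finset.mem_range.1 hy)] at hdd'
      rw [hdd']
  have h1 := card_le_tau (X := 2 ^ (2 * s)) hsd (by
    intro d hd
    obtain ⟨x, hx, rfl⟩ := Finset.mem_image.1 hd
    rw [encode_ofNat]
    exact hc x (Finset.mem_range.1 hx))
  rw [Finset.card_image_of_injOn, Finset.card_range] at h1
  · omega
  · intro x hx y hy hxy
    have hxy' : ofNat Code (c x) = ofNat Code (c y) := hxy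
    rw [← hval x (by simpa using hx), ← hval y (by simpa using hy), hxy']

lemma exists_admissible : ∃ s : ℕ → ℕ, Admissible s ∧ ∀ n, 1 ≤ n → tau (2 ^ (2 * s n)) < 2 ^ n := by
  classical
  obtain ⟨g, hg, h⟩ := exists_two_pow_le_tau
  have hmem : ∀ n, 1 ≤ n → 2 ^ n ≤ tau (2 ^ (2 * (g * n) + 2)) := fun n hn =>
    (h n hn).trans (tau_mono (Nat.pow_le_pow_right (by norm_num) (by omega)))
  refine ⟨fun n => sInf {s | 2 ^ n ≤ tau (2 ^ (2 * s + 2))}, ⟨?_, ?_⟩, fun n hn => ?_⟩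
  · refine (PolyB.id.const_mul g).mono ?_
    filter_upwards [eventually_ge_atTop 1] with n hn
    exact Nat.sInf_le (hmem n hn)
  · filter_upwards [eventually_ge_atTop 1] with n hn
    exact Nat.sInf_mem (s := {s | 2 ^ n ≤ tau (2 ^ (2 * s + 2))}) ⟨g * n, hmem n hn⟩
  · dsimp only
    rcases Nat.eq_zero_or_pos (sInf {s | 2 ^ n ≤ tau (2 ^ (2 * s + 2))}) with h0 | h0
    · rw [h0]
      have h1 : tau (2 ^ (2 * 0)) ≤ 1 := tau_le _
      have h2 : 2 ^ 1 ≤ 2 ^ n := Nat.pow_le_pow_right (by norm_num) hn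
      omega
    · obtain ⟨k, hk⟩ : ∃ k, sInf {s | 2 ^ n ≤ tau (2 ^ (2 * s + 2))} = k + 1 :=
        ⟨_, (Nat.succ_pred_eq_of_pos h0).symm⟩
      rw [hk]
      by_contra hcon
      have h1 : sInf {s | 2 ^ n ≤ tau (2 ^ (2 * s + 2))} ≤ k := Nat.sInf_le (not_lt.1 hcon)
      omega

/-- For large `n` some code of length at most `s` finds a number that codes of length at most
`2 * s` need longer to produce than all halting codes of length at most `n / 2` need to halt. -/
lemma exists_witness : ∃ s : ℕ → ℕ, ∀ᶠ n in atTop, ∃ t x : ℕ, ∃ h : Code,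
    encode h < 2 ^ s n ∧ h.eval 0 = Part.some x ∧ x < 2 ^ n ∧
    (∀ c : Code, encode c < 2 ^ (2 * s n) → Code.evaln t c 0 ≠ some x) ∧
    ∀ e : Code, encode e < 2 ^ (n / 2) → (e.eval 0).Dom → (Code.evaln t e 0).isSome = true := by
  obtain ⟨s, hs, hs'⟩ := exists_admissible
  obtain ⟨m, hm, hm'⟩ := hs.exists_carry
  obtain ⟨σ, hσ, hσs⟩ := exists_partrec_search primrecPred_target
  have hφ : Partrec fun p : (ℕ × ℕ × ℕ) × ℕ × ℕ => (σ (p.1, p.2.1)).map Prod.snd := by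
    have h1 : Computable fun p : (ℕ × ℕ × ℕ) × ℕ × ℕ => (p.1, p.2.1) :=
      Computable.fst.pair (Computable.fst.comp Computable.snd)
    have h2 : Computable fun p : ((ℕ × ℕ × ℕ) × ℕ × ℕ) × ℕ × ℕ => p.2.2 :=
      Computable.snd.comp Computable.snd
    have h3 := (hσ.comp h1).map h2.to₂
    exact h3
  obtain ⟨D, hD⟩ : ∃ D, ∀ᶠ n in atTop, Nat.pair n (Nat.pair (s n) (n / 2)) ≤ n ^ D :=
    PolyB.id.pair (hs.poly.pair (PolyB.id.mono (Eventually.of_forall fun n => Nat.div_le_self n 2)))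
  refine ⟨s, ?_⟩
  filter_upwards [hm', hm.use hφ D, hD, eventually_ge_atTop 14] with n hmn hu hD hn
  obtain ⟨q, hq⟩ : ∃ q, q = (haltForms (n / 2)).card := ⟨_, rfl⟩
  have hqm : q < 2 ^ m n := by
    have h1 := redNum_two_pow (n / 2) (by omega)
    have h2 : q ≤ redNum (2 ^ (n / 2)) := hq ▸ card_haltForms_le _
    have h3 : q ^ 256 < (2 ^ m n) ^ 256 := by
      refine ((Nat.pow_le_pow_left h2 256).trans h1).trans_lt ?_
      rw [← pow_mul]
      exact Nat.pow_lt_pow_right (by norm_num) (by omega)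
    exact lt_of_pow_lt_pow_left₀ 256 (Nat.zero_le _) h3
  obtain ⟨T, hT⟩ := exists_time (n / 2)
  obtain ⟨y, hy, hy'⟩ := exists_missed (hs' n (by omega)) T
  obtain ⟨⟨t, x⟩, ⟨htq, hxn, hxc⟩, hσ'⟩ :=
    hσs ((n, s n, n / 2), q) ⟨(T, y), hq ▸ hT, hy, hy'⟩
  obtain ⟨h, hh, hh'⟩ := hu (n, s n, n / 2) hD q hqm
  refine ⟨t, x, h, hh, ?_, hxn, fun c hc => ?_, fun e he hd => ?_⟩
  · refine (hh' 0).trans ?_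
    rw [hσ', Part.map_some, Part.map_some]
    rfl
  · have := hxc (encode c) hc
    rwa [ofNat_encode] at this
  · rw [hq] at htq
    exact isSome_of_knownNum htq he hd

/-! ### The halting time of short programs -/

lemma codeLength_le {c : Code} {ℓ : ℕ} : codeLength c ≤ ℓ ↔ encode c < 2 ^ ℓ := Nat.size_le

lemma K_le {x ℓ : ℕ} {h : Code} (hl : encode h < 2 ^ ℓ) (hx : h.eval 0 = Part.some x) :
    K x ≤ ℓ :=
  Nat.sInf_le ⟨h, codeLength_le.2 hl, hx⟩

lemma exists_of_K (x : ℕ) : ∃ e : Code, codeLength e ≤ K x ∧ e.eval 0 = Part.some x := by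
  have h := Nat.sInf_mem (s := {ℓ : ℕ | ∃ e : Code, codeLength e ≤ ℓ ∧ e.eval 0 = Part.some x})
    ⟨_, Code.const x, le_rfl, Code.eval_const x 0⟩
  exact h

lemma exists_of_Kt_le {t x ℓ : ℕ} (h : Kt t x ≤ (ℓ : ℕ∞)) :
    ∃ e : Code, codeLength e ≤ ℓ ∧ Code.evaln t e 0 = some x := by
  have hne : {ℓ : ℕ∞ | ∃ e : Code, (codeLength e : ℕ∞) ≤ ℓ ∧ Code.evaln t e 0 = some x}.Nonempty := by
    by_contra hcon
    rw [Set.not_nonempty_iff_eq_empty] at hcon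
    rw [Kt, hcon, sInf_empty, top_le_iff] at h
    exact ENat.natCast_ne_top _ h
  obtain ⟨e, he, hx⟩ := csInf_mem hne
  exact ⟨e, by exact_mod_cast he.trans h, hx⟩

lemma Tn'_spec (n : ℕ) : ∀ x < 2 ^ n, Kt (Tn' n) x ≤ 2 * (K x : ℕ∞) := by
  have hne : {T : ℕ | ∀ x < 2 ^ n, Kt T x ≤ 2 * (K x : ℕ∞)}.Nonempty := by
    choose e he hx using exists_of_K
    have ht : ∀ x, ∃ t, x ∈ Code.evaln t (e x) 0 := fun x =>
      Code.evaln_complete.1 (by rw [hx]; exact Part.mem_some _)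
    choose κ hκ using ht
    obtain ⟨T, hT⟩ := exists_bound (Finset.range (2 ^ n)) 1 fun x _ => κ x
    refine ⟨T, fun x hxn => ?_⟩
    have h1 : Kt T x ≤ (K x : ℕ∞) := sInf_le ⟨e x, by exact_mod_cast he x,
      Code.evaln_mono (hT x (Finset.mem_range.2 hxn) 0 one_pos).le (hκ x)⟩
    refine h1.trans ?_
    exact_mod_cast (by omega : K x ≤ 2 * K x)
  exact Nat.sInf_mem hne

lemma Tn'_pos (n : ℕ) : 0 < Tn' n := by
  by_contra h
  have h0 : Tn' n = 0 := by omega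
  have h1 := Tn'_spec n 0 (by positivity)
  rw [h0] at h1
  obtain ⟨e, -, he⟩ := exists_of_Kt_le (ℓ := 2 * K 0) (by exact_mod_cast h1)
  simp [Code.evaln] at he

end ShortHalt

open ShortHalt in
/-- every program of length at most `n / 2 - O(log n)` that terminates
at all terminates within `Tn' n` steps. -/
theorem short_programs_halt_by_Tn' :
    ∃ c : ℕ, ∀ n : ℕ, ∀ e : Nat.Partrec.Code, 2 * codeLength e + c * Nat.size n ≤ n →
      ∀ h : (e.eval 0).Dom,
        Nat.Partrec.Code.evaln (Tn' n) e 0 = some ((e.eval 0).get h) := by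
  obtain ⟨s, hs⟩ := exists_witness
  obtain ⟨N, hN⟩ := Filter.eventually_atTop.1 hs
  refine ⟨N, fun n e hle hd => ?_⟩
  have key : (Code.evaln (Tn' n) e 0).isSome = true := by
    rcases Nat.eq_zero_or_pos n with rfl | hn
    · -- Only the code `zero` has length `0`.
      have h1 : Encodable.encode e < 2 ^ 0 := codeLength_le.1 (by omega)
      have h2 : e = Code.zero := Encodable.encode_injective (by
        change Encodable.encode e = 0
        omega)
      obtain ⟨k, hk⟩ : ∃ k, Tn' 0 = k + 1 := ⟨_, (Nat.succ_pred_eq_of_pos (Tn'_pos 0)).symm⟩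
      rw [hk, h2]
      simp [Code.evaln]
    · have hsz : 1 ≤ Nat.size n := Nat.size_pos.2 hn
      have hNn : N * 1 ≤ N * Nat.size n := Nat.mul_le_mul_left N hsz
      obtain ⟨t, x, h, hh, hx, hxn, hmiss, hhalt⟩ := hN n (by omega)
      have h1 := hhalt e (codeLength_le.1 (by omega)) hd
      have ht : t ≤ Tn' n := by
        by_contra hlt
        have h2 : Kt (Tn' n) x ≤ ((2 * s n : ℕ) : ℕ∞) := by
          refine (Tn'_spec n x hxn).trans ?_
          exact_mod_cast Nat.mul_le_mul_left 2 (K_le hh hx)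
        obtain ⟨c, hc, hcx⟩ := exists_of_Kt_le h2
        exact hmiss c (codeLength_le.1 hc) (Code.evaln_mono (by omega) hcx)
      obtain ⟨v, hv⟩ := Option.isSome_iff_exists.1 h1
      exact Option.isSome_iff_exists.2 ⟨v, Code.evaln_mono ht hv⟩
  obtain ⟨v, hv⟩ := Option.isSome_iff_exists.1 key
  rw [hv, Part.get_eq_of_mem (Code.evaln_sound hv) hd]
end

section
/- Soundness of randomized proof strategies (Proposition 1): let L be a first-order language, T a theory, F a sentence, M a structure with M ⊨ T, and fix a proof strategy of depth d given by functions N(h) : ℕ, δ(h) : ℝ≥0 and sentences ψ(h,r) for each history h (a list of previously chosen strings, |h| < d) and each string r of N(h) bits. Assume: (i) along every full path the sum of the thresholds δ is at most ε; (ii) for every history h, the number of strings r of length N(h) with M ⊭ ψ(h,r) is at most δ(h)·2^{N(h)}. Let Γ(h) be the set of sentences accepted along h, and generate a full history by choosing each r uniformly and independently. If the probability that the final history h satisfies 'F is a semantic consequence of T ∪ Γ(h)' is greater than ε, then M ⊨ F. -/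
/-!
Suppose `F` fails in `M`. For a history `h`, let `s(h)` be the capital already spent along `h`, and
let `bad(h)` be `1` if some sentence accepted along `h` is false in `M`, and `0` otherwise. Then for
every valid `h` the probability of success from `h` is at most `ε - s(h) + bad(h)`
(`strategyProb_le`); at the empty history this is `ε`, contradicting the hypothesis.

The bound is proved by induction on the number of remaining steps. At a full history with
`bad(h) = 0`, success is impossible, since `M` is a model of `T` and of the accepted axioms in which
`F` fails. At an earlier history, averaging over the next string `r` lowers `ε - s` by `δ(h)`, while
the average of `bad` grows by at most `δ(h)`, by the counting hypothesis. Keeping the term `bad(h)`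
in the bound, instead of treating only histories whose accepted axioms hold, means that no
nonnegativity of the remaining capital is needed.
-/

open FirstOrder FirstOrder.Language

/-- A history (list of previously chosen bit-strings) is valid for the strategy if the
string chosen at each step has the bit-length prescribed by the strategy. -/
def ValidHistory (N : List (List Bool) → ℕ) (h : List (List Bool)) : Prop :=
  ∀ i < h.length, (h.getD i []).length = N (h.take i)

open scoped Classical in
/-- `strategyProb N S d h`: the probability that, continuing from history `h` for `d`
more steps, each step appending a uniformly random string of `N h'` bits to the current
history `h'`, the resulting full history satisfies `S`. -/
noncomputable def strategyProb (N : List (List Bool) → ℕ) (S : List (List Bool) → Prop) :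
    ℕ → List (List Bool) → ℝ
  | 0, h => if S h then 1 else 0
  | d + 1, h =>
      (∑ r : Fin (N h) → Bool, strategyProb N S d (h ++ [List.ofFn r])) / 2 ^ (N h)

/-- `accepted ψ h`: the set of sentences accepted along the history `h`, namely the
candidate axiom `ψ h' r` for each step, where `h'` is the previous history and `r`
the string chosen at that step. -/
def accepted {L : Language} (ψ : List (List Bool) → List Bool → L.Sentence)
    (h : List (List Bool)) : L.Theory :=
  {φ | ∃ i < h.length, φ = ψ (h.take i) (h.getD i [])}

/-- The capital spent along the history `h`. -/
noncomputable def spent (δ : List (List Bool) → NNReal) (h : List (List Bool)) : ℝ :=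
  ∑ i ∈ Finset.range h.length, (δ (h.take i) : ℝ)

lemma spent_append (δ : List (List Bool) → NNReal) (h : List (List Bool)) (r : List Bool) :
    spent δ (h ++ [r]) = spent δ h + δ h := by
  unfold spent
  rw [List.length_append, List.length_singleton, Finset.sum_range_succ, List.take_left]
  congr 1
  refine Finset.sum_congr rfl fun i hi => ?_
  rw [List.take_append_of_le_length (Finset.mem_range.1 hi).le]

lemma ValidHistory.append {N : List (List Bool) → ℕ} {h : List (List Bool)}
    (hv : ValidHistory N h) {r : List Bool} (hr : r.length = N h) :
    ValidHistory N (h ++ [r]) := by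
  intro i hi
  rw [List.length_append, List.length_singleton] at hi
  rcases Nat.lt_succ_iff_lt_or_eq.1 hi with hi | rfl
  · rw [List.take_append_of_le_length hi.le, List.getD_append _ _ _ _ hi]
    exact hv i hi
  · rw [List.take_left]
    simpa using hr

lemma accepted_append {L : Language} (ψ : List (List Bool) → List Bool → L.Sentence)
    (h : List (List Bool)) (r : List Bool) :
    accepted ψ (h ++ [r]) ⊆ insert (ψ h r) (accepted ψ h) := by
  rintro φ ⟨i, hi, rfl⟩
  rw [List.length_append, List.length_singleton] at hi
  rcases Nat.lt_succ_iff_lt_or_eq.1 hi with hi | rfl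
  · right
    refine ⟨i, hi, ?_⟩
    rw [List.take_append_of_le_length hi.le, List.getD_append _ _ _ _ hi]
  · left
    rw [List.take_left]
    simp

open scoped Classical in
/-- The invariant of the argument: if `F` fails in `M`, the probability of success from a valid
history is at most the remaining capital, plus `1` if a false axiom has already been accepted. -/
lemma strategyProb_le {L : Language} (T : L.Theory) (F : L.Sentence)
    (M : Type*) [L.Structure M] [Nonempty M] (hM : M ⊨ T) (hF : ¬ M ⊨ F)
    (d : ℕ) (N : List (List Bool) → ℕ) (δ : List (List Bool) → NNReal) (ε : ℝ)
    (ψ : List (List Bool) → List Bool → L.Sentence)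
    (hsum : ∀ h : List (List Bool), h.length = d → ValidHistory N h →
      ∑ i ∈ Finset.range d, (δ (h.take i) : ℝ) ≤ ε)
    (hcount : ∀ h : List (List Bool), h.length < d → ValidHistory N h →
      ({r : Fin (N h) → Bool | ¬ M ⊨ ψ h (List.ofFn r)}.ncard : ℝ) ≤ δ h * 2 ^ (N h))
    (n : ℕ) (h : List (List Bool)) (hlen : h.length + n = d) (hv : ValidHistory N h) :
    strategyProb N (fun h => (T ∪ accepted ψ h) ⊨ᵇ F) n h ≤
      ε - spent δ h + (if M ⊨ accepted ψ h then 0 else 1) := by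
  induction n generalizing h with
  | zero =>
    have hs : spent δ h ≤ ε := by
      have := hsum h (by simpa using hlen) hv
      rw [← hlen] at this
      exact this
    rw [strategyProb]
    by_cases hg : M ⊨ accepted ψ h
    · have hno : ¬ ((T ∪ accepted ψ h) ⊨ᵇ F) := by
        intro hc
        have : M ⊨ T ∪ accepted ψ h := Theory.model_union_iff.2 ⟨hM, hg⟩
        exact hF (hc.realize_sentence M)
      rw [if_neg hno, if_pos hg]
      linarith
    · rw [if_neg hg]
      split_ifs <;> linarith
  | succ n ih =>
    rw [strategyProb, div_le_iff₀ (by positivity)]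
    have hstep : ∀ r : Fin (N h) → Bool,
        strategyProb N (fun h => (T ∪ accepted ψ h) ⊨ᵇ F) n (h ++ [List.ofFn r]) ≤
          (ε - spent δ h - δ h + (if M ⊨ accepted ψ h then 0 else 1)) +
            (if ¬ M ⊨ ψ h (List.ofFn r) then 1 else 0) := by
      intro r
      have hr := ih (h ++ [List.ofFn r]) (by simp; omega) (hv.append (by simp))
      rw [spent_append] at hr
      have hbad : (if M ⊨ accepted ψ (h ++ [List.ofFn r]) then (0 : ℝ) else 1) ≤
          (if M ⊨ accepted ψ h then 0 else 1) +
            (if ¬ M ⊨ ψ h (List.ofFn r) then 1 else 0) := by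
        by_cases h1 : M ⊨ accepted ψ h
        · by_cases h2 : M ⊨ ψ h (List.ofFn r)
          · have h3 : M ⊨ accepted ψ (h ++ [List.ofFn r]) := by
              refine (Theory.model_iff _).2 fun φ hφ => ?_
              rcases accepted_append ψ h _ hφ with rfl | hφ
              · exact h2
              · exact h1.realize_of_mem φ hφ
            simp [h1, h2, h3]
          · simp only [h1, h2]
            split_ifs <;> simp_all
        · rw [if_neg h1]
          split_ifs <;> norm_num
      linarith
    have hc := hcount h (by omega) hv
    have hcard : (∑ r : Fin (N h) → Bool, if ¬ M ⊨ ψ h (List.ofFn r) then (1 : ℝ) else 0) =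
        ({r : Fin (N h) → Bool | ¬ M ⊨ ψ h (List.ofFn r)}.ncard : ℝ) := by
      rw [Finset.sum_boole, Set.ncard_eq_toFinset_card']
      simp
    refine (Finset.sum_le_sum fun r _ => hstep r).trans ?_
    rw [Finset.sum_add_distrib, hcard, Finset.sum_const, Finset.card_univ, nsmul_eq_mul]
    simp only [Fintype.card_pi, Fintype.card_bool, Finset.prod_const, Finset.card_univ,
      Fintype.card_fin, Nat.cast_pow, Nat.cast_ofNat]
    linarith

/-- soundness of randomized proof strategies, Proposition 1: let `M` be a
model of `T`. If (i) along every valid full history the thresholds `δ` sum to at most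
`ε`, and (ii) at each history at most a `δ h` fraction of the `2 ^ (N h)` candidate
axioms are false in `M`, and the probability that a random run of the strategy makes `F`
a semantic consequence of `T` together with the accepted axioms is greater than `ε`,
then `F` is true in `M`. -/
theorem randomized_proof_soundness {L : Language} (T : L.Theory) (F : L.Sentence)
    (M : Type*) [L.Structure M] [Nonempty M] (hM : M ⊨ T)
    (d : ℕ) (N : List (List Bool) → ℕ) (δ : List (List Bool) → NNReal) (ε : ℝ)
    (ψ : List (List Bool) → List Bool → L.Sentence)
    (hsum : ∀ h : List (List Bool), h.length = d → ValidHistory N h →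
      ∑ i ∈ Finset.range d, (δ (h.take i) : ℝ) ≤ ε)
    (hcount : ∀ h : List (List Bool), h.length < d → ValidHistory N h →
      ({r : Fin (N h) → Bool | ¬ M ⊨ ψ h (List.ofFn r)}.ncard : ℝ) ≤ δ h * 2 ^ (N h))
    (hprob : ε < strategyProb N (fun h => (T ∪ accepted ψ h) ⊨ᵇ F) d []) :
    M ⊨ F := by
  by_contra hF
  have hb := strategyProb_le T F M hM hF d N δ ε ψ hsum hcount d [] (by simp)
    (by intro i hi; simp at hi)
  have hg : M ⊨ accepted ψ [] := (Theory.model_iff _).2 (by rintro φ ⟨i, hi, -⟩; simp at hi)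
  rw [if_pos hg] at hb
  simp only [spent, List.length_nil, Finset.range_zero, Finset.sum_empty] at hb
  linarith
end
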